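/- arXiv:2409.12879 — 3 statements merged into one kernel-verified Lean document; each statement's English description precedes it below -/
import Mathlib

section
/- Fix an integer base b ≥ 2, s ≥ 1, an integer t ≥ 0, p, q ∈ [1,∞], and α ∈ ℝ with α ≥ 1/p if q = 1 and α > 1/p if q > 1. Then there exists a constant C > 0, depending only on s, p, q, α, b and t, such that for every integer m ≥ max(1,t) and every (t,m,s)-net P in base b with N = b^m points, the worst-case error of the QMC rule Q_P over the unit ball of the Haar wavelet norm satisfies e^{wor}(Q_P) := sup{ |∫_{[0,1]^s} f(x) dx − b^{−m} Σ_{p∈P} S(f)(p)| : f ∈ L_1([0,1]^s), ‖f‖_{wav,α,s,p,q} ≤ 1 } ≤ C N^{−α} (ln N)^{(s−1)/q′}, where q′ is the conjugate exponent of q; in particular, for q = 1 one has e^{wor}(Q_P) ≤ C N^{−α}. -/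
open MeasureTheory ENNReal Set

noncomputable section

/-- The index set `Δ_{j-1}` (for level `j`). -/
def deltaIdx (b j : ℕ) : Finset ℕ := if j = 0 then {0} else Finset.range (b ^ (j - 1))

/-- The index set `∇_j`. -/
def nablaIdx (b j : ℕ) : Finset ℕ := if j = 0 then {0} else Finset.range b

/-- The univariate Haar-type wavelet `ψ^j_{i,k}` in base `b`. -/
def haarPsi (b : ℕ) (j i k : ℕ) (x : ℝ) : ℝ :=
  if j = 0 then (Set.Ico (0:ℝ) 1).indicator (fun _ => (1:ℝ)) x
  else (b : ℝ) ^ ((j : ℝ) / 2 - 1) *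
    ((b : ℝ) *
        (Set.Ico ((b:ℝ) ^ (-(j:ℝ)) * ((b:ℝ) * k + i))
          ((b:ℝ) ^ (-(j:ℝ)) * ((b:ℝ) * k + i + 1))).indicator (fun _ => (1:ℝ)) x
      - (Set.Ico ((b:ℝ) ^ (1 - (j:ℝ)) * k)
          ((b:ℝ) ^ (1 - (j:ℝ)) * (k + 1))).indicator (fun _ => (1:ℝ)) x)

/-- The multivariate tensor product wavelet `Ψ^j_{i,k}`. -/
def haarPsiS (b s : ℕ) (j i k : Fin s → ℕ) (x : Fin s → ℝ) : ℝ :=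
  ∏ ℓ, haarPsi b (j ℓ) (i ℓ) (k ℓ) (x ℓ)

/-- The unit cube `[0,1]^s`. -/
def cube (s : ℕ) : Set (Fin s → ℝ) := Set.Icc 0 1

/-- The index set `Δ_{j-1}` for multi-indices. -/
def deltaIdxS (b s : ℕ) (j : Fin s → ℕ) : Finset (Fin s → ℕ) :=
  Fintype.piFinset fun ℓ => deltaIdx b (j ℓ)

/-- The index set `∇_j` for multi-indices. -/
def nablaIdxS (b s : ℕ) (j : Fin s → ℕ) : Finset (Fin s → ℕ) :=
  Fintype.piFinset fun ℓ => nablaIdx b (j ℓ)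

/-- The Haar coefficient `⟨f, Ψ^j_{i,k}⟩ = ∫_{[0,1]^s} f Ψ^j_{i,k}`. -/
def haarCoef (b s : ℕ) (f : (Fin s → ℝ) → ℝ) (j i k : Fin s → ℕ) : ℝ :=
  ∫ x in cube s, f x * haarPsiS b s j i k x

/-- Finite `ℓ^p`-type norm with exponent `p ∈ [1,∞]` (maximum when `p = ∞`). -/
def lpIdx (p : ℝ≥0∞) {ι : Type*} (A : Finset ι) (g : ι → ℝ≥0∞) : ℝ≥0∞ :=
  if p = ∞ then A.sup g else (∑ a ∈ A, g a ^ p.toReal) ^ (1 / p.toReal)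

/-- `ℓ^q`-type norm over an arbitrary index type (supremum when `q = ∞`). -/
def lqIdx (q : ℝ≥0∞) {ι : Type*} (g : ι → ℝ≥0∞) : ℝ≥0∞ :=
  if q = ∞ then ⨆ i, g i else (∑' i, g i ^ q.toReal) ^ (1 / q.toReal)

/-- The Haar wavelet norm `‖f‖_{wav,α,s,p,q}` (with the conventions for `p = ∞`, `q = ∞`). -/
def wavNorm (b s : ℕ) (α : ℝ) (p q : ℝ≥0∞) (f : (Fin s → ℝ) → ℝ) : ℝ≥0∞ :=
  lqIdx q fun j : Fin s → ℕ =>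
    ENNReal.ofReal ((b : ℝ) ^ ((α - 1 / p.toReal + 1 / 2) * ∑ ℓ, (j ℓ : ℝ))) *
      lpIdx p (deltaIdxS b s j ×ˢ nablaIdxS b s j)
        (fun ki => ENNReal.ofReal |haarCoef b s f j ki.2 ki.1|)

/-- The pointwise wavelet expansion `S(f)`. -/
def wavExp (b s : ℕ) (f : (Fin s → ℝ) → ℝ) (x : Fin s → ℝ) : ℝ :=
  ∑' j : Fin s → ℕ, ∑ k ∈ deltaIdxS b s j, ∑ i ∈ nablaIdxS b s j,
    haarCoef b s f j i k * haarPsiS b s j i k x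

/-- The elementary `b`-adic box `E^j_a`. -/
def elemBox (b s : ℕ) (j a : Fin s → ℕ) : Set (Fin s → ℝ) :=
  {x | ∀ ℓ, (a ℓ : ℝ) * ((b : ℝ) ^ (j ℓ))⁻¹ ≤ x ℓ ∧ x ℓ < ((a ℓ : ℝ) + 1) * ((b : ℝ) ^ (j ℓ))⁻¹}

open Classical in
/-- A `(t,m,s)`-net in base `b`: a multiset of `b^m` points of `[0,1)^s` such that every
elementary box of volume `b^{t-m}` contains exactly `b^t` of the points. -/
def IsNet (b s t m : ℕ) (P : Multiset (Fin s → ℝ)) : Prop :=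
  Multiset.card P = b ^ m ∧ (∀ x ∈ P, ∀ ℓ, 0 ≤ x ℓ ∧ x ℓ < 1) ∧
    ∀ j a : Fin s → ℕ, (∑ ℓ, j ℓ) = m - t → (∀ ℓ, a ℓ < b ^ j ℓ) →
      Multiset.card (P.filter (· ∈ elemBox b s j a)) = b ^ t

/-- The space `V^{s,L}`, spanned by indicators of elementary boxes of volume `b^{-L}`. -/
def Vspace (b s L : ℕ) : Submodule ℝ ((Fin s → ℝ) → ℝ) :=
  Submodule.span ℝ
    {f | ∃ j a : Fin s → ℕ, (∑ ℓ, j ℓ) = L ∧ (∀ ℓ, a ℓ < b ^ j ℓ) ∧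
      f = (elemBox b s j a).indicator fun _ => (1:ℝ)}

/-- cell index of level `j`. -/
def cell (b j : ℕ) (x : ℝ) : ℕ := ⌊x * (b:ℝ) ^ j⌋₊

lemma cell_eq_iff {b : ℕ} (hb : 2 ≤ b) (j k : ℕ) {x : ℝ} (hx : 0 ≤ x) :
    cell b j x = k ↔ (k:ℝ) * ((b:ℝ) ^ j)⁻¹ ≤ x ∧ x < ((k:ℝ) + 1) * ((b:ℝ) ^ j)⁻¹ := by
  have hpos : (0:ℝ) < (b:ℝ) ^ j := by positivity
  unfold cell
  rw [Nat.floor_eq_iff (by positivity), ← div_eq_mul_inv, ← div_eq_mul_inv, div_le_iff₀ hpos,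
    lt_div_iff₀ hpos]

lemma cell_div {b : ℕ} (hb : 2 ≤ b) (j d : ℕ) (x : ℝ) :
    cell b j x = cell b (j + d) x / b ^ d := by
  have hpos : (0:ℝ) < (b:ℝ) ^ d := by positivity
  unfold cell
  rw [← Nat.floor_div_natCast]
  congr 1
  push_cast
  rw [pow_add]
  field_simp

lemma cell_lt {b : ℕ} (hb : 2 ≤ b) (j : ℕ) {x : ℝ} (hx : 0 ≤ x) (hx1 : x < 1) :
    cell b j x < b ^ j := by
  have hpos : (0:ℝ) < (b:ℝ) ^ j := by positivity
  unfold cell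
  rw [Nat.floor_lt (by positivity)]
  push_cast
  nlinarith

lemma deltaIdx_eq (b j : ℕ) : deltaIdx b j = Finset.range (b ^ (j - 1)) := by
  unfold deltaIdx
  split_ifs with h
  · subst h; simp
  · rfl

/-- the wavelet in terms of cells of level `J`. -/
def hfun (b j i k J a : ℕ) : ℝ :=
  if j = 0 then 1 else (b:ℝ) ^ ((j:ℝ) / 2 - 1) *
    ((b:ℝ) * (if a / b ^ (J - j) = b * k + i then 1 else 0)
      - (if a / b ^ (J - j + 1) = k then 1 else 0))

lemma haarPsi_eq {b : ℕ} (hb : 2 ≤ b) {j J : ℕ} (i k : ℕ) (hJ : j ≤ J) {x : ℝ} (hx : 0 ≤ x)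
    (hx1 : x < 1) : haarPsi b j i k x = hfun b j i k J (cell b J x) := by
  unfold haarPsi hfun
  by_cases h0 : j = 0
  · rw [if_pos h0, if_pos h0, Set.indicator_of_mem]; exact ⟨hx, hx1⟩
  · have hb0 : (0:ℝ) < b := by positivity
    rw [if_neg h0, if_neg h0]
    congr 2
    · congr 1
      have h1 : cell b J x / b ^ (J - j) = cell b j x := by
        rw [cell_div hb j (J - j), Nat.add_sub_cancel' hJ]
      rw [h1]
      simp only [Set.indicator_apply, Set.mem_Ico]
      refine if_congr ?_ rfl rfl
      rw [cell_eq_iff hb _ _ hx, Real.rpow_neg hb0.le, Real.rpow_natCast]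
      push_cast
      rw [mul_comm ((b:ℝ) ^ j)⁻¹, mul_comm ((b:ℝ) ^ j)⁻¹]
    · have h1 : cell b J x / b ^ (J - j + 1) = cell b (j - 1) x := by
        rw [cell_div hb (j - 1) (J - j + 1)]
        congr 2
        omega
      rw [h1]
      simp only [Set.indicator_apply, Set.mem_Ico]
      refine if_congr ?_ rfl rfl
      have h2 : (1 - (j:ℝ)) = -((j - 1 : ℕ) : ℝ) := by
        rw [Nat.cast_sub (by omega)]; push_cast; ring
      rw [cell_eq_iff hb _ _ hx, h2, Real.rpow_neg hb0.le, Real.rpow_natCast]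
      rw [mul_comm ((b:ℝ) ^ (j-1))⁻¹, mul_comm ((b:ℝ) ^ (j-1))⁻¹]

lemma haarPsi_abs_le {b : ℕ} (hb : 2 ≤ b) {j i k : ℕ} (hi : i ∈ nablaIdx b j)
    (hk : k ∈ deltaIdx b j) {x : ℝ} (hx : 0 ≤ x) (hx1 : x < 1) :
    |haarPsi b j i k x| ≤ (b:ℝ) ^ ((j:ℝ) / 2) * (if cell b (j - 1) x = k then 1 else 0) := by
  have hb0 : (0:ℝ) < b := by positivity
  rw [haarPsi_eq hb i k le_rfl hx hx1]
  unfold hfun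
  rw [deltaIdx_eq] at hk
  by_cases h0 : j = 0
  · subst h0
    have := cell_lt hb 0 hx hx1
    simp only [Finset.mem_range, zero_tsub, pow_zero, Nat.lt_one_iff] at hk this
    simp [this, hk]
  have e : cell b (j - 1) x = cell b j x / b := by
    have := cell_div hb (j - 1) 1 x
    rwa [Nat.sub_add_cancel (by omega), pow_one] at this
  simp only [nablaIdx, h0, if_false, Finset.mem_range] at hi
  simp only [h0, if_false, Nat.sub_self, pow_zero, Nat.div_one, zero_add, pow_one, ← e]
  have hp : (0:ℝ) < (b:ℝ) ^ ((j:ℝ)/2 - 1) := by positivity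
  have hE : (b:ℝ) ^ ((j:ℝ)/2) = (b:ℝ) ^ ((j:ℝ)/2 - 1) * b := by
    rw [Real.rpow_sub hb0, Real.rpow_one]; field_simp
  have hb2 : (2:ℝ) ≤ b := by exact_mod_cast hb
  rw [abs_mul, abs_of_pos hp, hE, mul_assoc]
  refine mul_le_mul_of_nonneg_left ?_ hp.le
  by_cases h1 : cell b (j - 1) x = k
  · rw [if_pos h1]
    split_ifs
    · rw [abs_le]; constructor <;> linarith
    · rw [abs_le]; constructor <;> linarith
  · rw [if_neg h1, if_neg]
    · simp
    · intro h2
      apply h1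
      rw [e, h2, Nat.mul_add_div (by omega), Nat.div_eq_of_lt hi, add_zero]

lemma card_div_eq {b : ℕ} (hb : 2 ≤ b) {J d c : ℕ} (hd : d ≤ J) (hc : c < b ^ (J - d)) :
    ∑ a ∈ Finset.range (b ^ J), (if a / b ^ d = c then (1:ℝ) else 0) = (b:ℝ) ^ d := by
  have hpos : 0 < b ^ d := by positivity
  rw [Finset.sum_boole]
  have : (Finset.range (b ^ J)).filter (fun a => a / b ^ d = c) =
      Finset.Ico (c * b ^ d) ((c + 1) * b ^ d) := by
    ext a
    simp only [Finset.mem_filter, Finset.mem_range, Finset.mem_Ico]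
    rw [Nat.div_eq_iff hpos]
    have h1 : (c + 1) * b ^ d ≤ b ^ J := by
      calc (c + 1) * b ^ d ≤ b ^ (J - d) * b ^ d := by gcongr; omega
        _ = b ^ J := by rw [← pow_add]; congr 1; omega
    rw [add_mul, one_mul] at *
    omega
  rw [this, Nat.card_Ico, add_mul, one_mul, Nat.add_sub_cancel_left]
  push_cast; rfl

lemma hfun_sum_zero {b : ℕ} (hb : 2 ≤ b) {j i k J : ℕ} (hj : j ≠ 0) (hJ : j ≤ J)
    (hi : i ∈ nablaIdx b j) (hk : k ∈ deltaIdx b j) :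
    ∑ a ∈ Finset.range (b ^ J), hfun b j i k J a = 0 := by
  rw [deltaIdx_eq, Finset.mem_range] at hk
  simp only [nablaIdx, hj, if_false, Finset.mem_range] at hi
  simp only [hfun, hj, if_false]
  rw [← Finset.mul_sum, Finset.sum_sub_distrib, ← Finset.mul_sum, card_div_eq hb (by omega),
    card_div_eq hb (by omega)]
  · ring
  · convert hk using 2; omega
  · have : b ^ (J - (J - j)) = b * b ^ (j - 1) := by
      rw [← pow_succ']; congr 1; omega
    rw [this]
    calc b * k + i < b * k + b := by omega
      _ = b * (k + 1) := by ring
      _ ≤ _ := by gcongr; omega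

open Classical in
lemma sum_map_ite_card {β : Type*} (P : Multiset β) (r : β → Prop) :
    (P.map (fun x => if r x then (1:ℝ) else 0)).sum = (Multiset.card (P.filter r) : ℝ) := by
  induction P using Multiset.induction with
  | empty => simp
  | cons a P ih =>
    rw [Multiset.map_cons, Multiset.sum_cons, ih, Multiset.filter_cons]
    split_ifs <;> simp [add_comm]

/-- indexed version of nets. -/
def NetIdx (b s t m n : ℕ) (y : Fin n → Fin s → ℝ) : Prop :=
  n = b ^ m ∧ (∀ u ℓ, 0 ≤ y u ℓ ∧ y u ℓ < 1) ∧
    ∀ j a : Fin s → ℕ, (∑ ℓ, j ℓ) = m - t → (∀ ℓ, a ℓ < b ^ j ℓ) →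
      ∑ u, (if (fun ℓ => cell b (j ℓ) (y u ℓ)) = a then (1:ℝ) else 0) = (b:ℝ) ^ t

lemma net_exists {b s t m : ℕ} (hb : 2 ≤ b) {P : Multiset (Fin s → ℝ)} (hP : IsNet b s t m P) :
    ∃ n, ∃ y : Fin n → Fin s → ℝ, NetIdx b s t m n y ∧
      ∀ g : (Fin s → ℝ) → ℝ, (P.map g).sum = ∑ u, g (y u) := by
  classical
  obtain ⟨h1, h2, h3⟩ := hP
  induction P using Quotient.inductionOn with | _ l => ?_
  have key : ∀ g : (Fin s → ℝ) → ℝ,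
      ((↑l : Multiset (Fin s → ℝ)).map g).sum = ∑ u : Fin l.length, g l[u.1] := by
    intro g
    rw [Fin.sum_univ_fun_getElem, Multiset.map_coe, Multiset.sum_coe]
  refine ⟨l.length, fun u => l[u.1], ⟨?_, ?_, ?_⟩, key⟩
  · simpa using h1
  · intro u ℓ
    exact h2 _ (by simp) ℓ
  · intro j a hj ha
    have h4 := h3 j a hj ha
    have h5 := key (fun x => if x ∈ elemBox b s j a then (1:ℝ) else 0)
    rw [sum_map_ite_card] at h5
    have h6 : (Multiset.card (Multiset.filter (fun x => x ∈ elemBox b s j a)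
        (↑l : Multiset (Fin s → ℝ))) : ℝ) = (b:ℝ) ^ t := by
      exact_mod_cast h4
    rw [← h6, h5]
    refine Finset.sum_congr rfl fun u _ => ?_
    refine if_congr ?_ rfl rfl
    rw [funext_iff]
    unfold elemBox
    refine forall_congr' fun ℓ => ?_
    exact cell_eq_iff hb _ _ (h2 _ (by simp) ℓ).1

lemma haarPsiS_abs_le {b s : ℕ} (hb : 2 ≤ b) {j i k : Fin s → ℕ} (hi : i ∈ nablaIdxS b s j)
    (hk : k ∈ deltaIdxS b s j) {x : Fin s → ℝ} (hx : ∀ ℓ, 0 ≤ x ℓ ∧ x ℓ < 1) :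
    |haarPsiS b s j i k x| ≤ (b:ℝ) ^ ((∑ ℓ, (j ℓ : ℝ)) / 2) *
      (if (fun ℓ => cell b (j ℓ - 1) (x ℓ)) = k then 1 else 0) := by
  have hb0 : (0:ℝ) < b := by positivity
  unfold haarPsiS
  rw [nablaIdxS, Fintype.mem_piFinset] at hi
  rw [deltaIdxS, Fintype.mem_piFinset] at hk
  rw [Finset.abs_prod]
  calc _ ≤ ∏ ℓ, ((b:ℝ) ^ ((j ℓ:ℝ) / 2) * (if cell b (j ℓ - 1) (x ℓ) = k ℓ then 1 else 0)) :=
        Finset.prod_le_prod (fun _ _ => abs_nonneg _)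
          fun ℓ _ => haarPsi_abs_le hb (hi ℓ) (hk ℓ) (hx ℓ).1 (hx ℓ).2
    _ = _ := by
        rw [Finset.prod_mul_distrib, Finset.prod_ite_zero, Finset.sum_div,
          Real.rpow_sum_of_pos hb0]
        simp [funext_iff]

lemma nabla_card {b s : ℕ} (hb : 2 ≤ b) (j : Fin s → ℕ) : (nablaIdxS b s j).card ≤ b ^ s := by
  rw [nablaIdxS, Fintype.card_piFinset]
  calc _ ≤ ∏ _ℓ : Fin s, b := by
        refine Finset.prod_le_prod' fun ℓ _ => ?_
        unfold nablaIdx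
        split_ifs
        · simp; omega
        · simp
    _ = _ := by simp

lemma sum_psi_le {b s : ℕ} (hb : 2 ≤ b) (j : Fin s → ℕ) {x : Fin s → ℝ}
    (hx : ∀ ℓ, 0 ≤ x ℓ ∧ x ℓ < 1) :
    ∑ ki ∈ deltaIdxS b s j ×ˢ nablaIdxS b s j, |haarPsiS b s j ki.2 ki.1 x| ≤
      (b:ℝ) ^ s * (b:ℝ) ^ ((∑ ℓ, (j ℓ : ℝ)) / 2) := by
  rw [Finset.sum_product_right]
  have hb0 : (0:ℝ) < b := by positivity
  calc _ ≤ ∑ i ∈ nablaIdxS b s j, (b:ℝ) ^ ((∑ ℓ, (j ℓ : ℝ)) / 2) := by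
        refine Finset.sum_le_sum fun i hi => ?_
        calc _ ≤ ∑ k ∈ deltaIdxS b s j, (b:ℝ) ^ ((∑ ℓ, (j ℓ : ℝ)) / 2) *
                (if (fun ℓ => cell b (j ℓ - 1) (x ℓ)) = k then 1 else 0) :=
              Finset.sum_le_sum fun k hk => haarPsiS_abs_le hb hi hk hx
          _ ≤ _ := by
              rw [← Finset.mul_sum, Finset.sum_ite_eq]
              refine mul_le_of_le_one_right (by positivity) ?_
              split_ifs <;> norm_num
    _ ≤ _ := by
        rw [Finset.sum_const, nsmul_eq_mul]
        gcongr
        exact_mod_cast nabla_card hb j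

lemma exists_le_sum {s : ℕ} (n d : ℕ) : ∀ j : Fin s → ℕ, ∑ ℓ, j ℓ = n + d →
    ∃ j', j' ≤ j ∧ ∑ ℓ, j' ℓ = n := by
  induction d with
  | zero => intro j hj; exact ⟨j, le_rfl, hj⟩
  | succ d ih =>
    intro j hj
    obtain ⟨ℓ, hℓ⟩ : ∃ ℓ, j ℓ ≠ 0 := by
      by_contra! h
      simp [h] at hj
    have h1 : ∑ u, Function.update j ℓ (j ℓ - 1) u = n + d := by
      rw [Finset.sum_update_of_mem (Finset.mem_univ _)]
      rw [← Finset.add_sum_erase _ _ (Finset.mem_univ ℓ), ← Finset.sdiff_singleton_eq_erase] at hj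
      omega
    obtain ⟨j', h2, h3⟩ := ih _ h1
    refine ⟨j', h2.trans ?_, h3⟩
    intro u
    by_cases hu : u = ℓ
    · subst hu; simp
    · simp [hu]

lemma count_le {b s t m n : ℕ} (hb : 2 ≤ b) {y : Fin n → Fin s → ℝ} (hy : NetIdx b s t m n y)
    (j : Fin s → ℕ) (hj : m - t ≤ ∑ ℓ, j ℓ) (k : Fin s → ℕ) :
    ∑ u, (if (fun ℓ => cell b (j ℓ - 1) (y u ℓ)) = k then (1:ℝ) else 0) ≤
      (b:ℝ) ^ s * (b:ℝ) ^ t := by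
  obtain ⟨h1, h2, h3⟩ := hy
  obtain ⟨d, hd⟩ := Nat.exists_eq_add_of_le hj
  obtain ⟨j', h4, h5⟩ := exists_le_sum _ _ j hd
  -- finer cells
  have step : ∀ a : Fin s → ℕ,
      ∑ u, (if (fun ℓ => cell b (j ℓ) (y u ℓ)) = a then (1:ℝ) else 0) ≤ (b:ℝ) ^ t := by
    intro a
    by_cases hne : ∃ u, (fun ℓ => cell b (j ℓ) (y u ℓ)) = a
    · obtain ⟨u0, hu0⟩ := hne
      rw [← h3 j' (fun ℓ => cell b (j' ℓ) (y u0 ℓ)) h5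
        (fun ℓ => cell_lt hb _ (h2 _ _).1 (h2 _ _).2)]
      refine Finset.sum_le_sum fun u _ => ?_
      by_cases hu : (fun ℓ => cell b (j ℓ) (y u ℓ)) = a
      · rw [if_pos hu, if_pos]
        funext ℓ
        have : cell b (j ℓ) (y u ℓ) = cell b (j ℓ) (y u0 ℓ) := congrFun (hu.trans hu0.symm) ℓ
        rw [cell_div hb (j' ℓ) (j ℓ - j' ℓ), Nat.add_sub_cancel' (h4 ℓ), this,
          cell_div hb (j' ℓ) (j ℓ - j' ℓ) (y u0 ℓ), Nat.add_sub_cancel' (h4 ℓ)]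
      · rw [if_neg hu]
        split_ifs <;> norm_num
    · push Not at hne
      simp only [hne, if_false, Finset.sum_const_zero]
      positivity
  let A : Finset (Fin s → ℕ) := Fintype.piFinset fun ℓ =>
    (Finset.range b).image (fun i => if j ℓ = 0 then 0 else b * k ℓ + i)
  have hA : (A.card : ℝ) ≤ (b:ℝ) ^ s := by
    have : A.card ≤ b ^ s := by
      rw [Fintype.card_piFinset]
      calc _ ≤ ∏ _ℓ : Fin s, b := by
            refine Finset.prod_le_prod' fun ℓ _ => ?_
            exact Finset.card_image_le.trans (by simp)
        _ = _ := by simp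
    exact_mod_cast this
  calc _ ≤ ∑ u, ∑ a ∈ A, (if (fun ℓ => cell b (j ℓ) (y u ℓ)) = a then (1:ℝ) else 0) := by
        refine Finset.sum_le_sum fun u _ => ?_
        rw [Finset.sum_ite_eq]
        by_cases hu : (fun ℓ => cell b (j ℓ - 1) (y u ℓ)) = k
        · rw [if_pos hu, if_pos]
          rw [Fintype.mem_piFinset]
          intro ℓ
          rw [Finset.mem_image]
          refine ⟨cell b (j ℓ) (y u ℓ) % b, Finset.mem_range.2 (Nat.mod_lt _ (by omega)), ?_⟩
          split_ifs with h0
          · have := cell_lt hb (j ℓ) (h2 u ℓ).1 (h2 u ℓ).2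
            rw [h0, pow_zero] at this
            rw [h0]; omega
          · have e := cell_div hb (j ℓ - 1) 1 (y u ℓ)
            rw [Nat.sub_add_cancel (by omega), pow_one] at e
            rw [← congrFun hu ℓ, e, Nat.div_add_mod]
        · rw [if_neg hu]
          split_ifs <;> norm_num
    _ = ∑ a ∈ A, ∑ u, (if (fun ℓ => cell b (j ℓ) (y u ℓ)) = a then (1:ℝ) else 0) :=
        Finset.sum_comm
    _ ≤ ∑ a ∈ A, (b:ℝ) ^ t := Finset.sum_le_sum fun a _ => step a
    _ ≤ _ := by
        rw [Finset.sum_const, nsmul_eq_mul]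
        gcongr

lemma sum_net_psi_le {b s t m n : ℕ} (hb : 2 ≤ b) {y : Fin n → Fin s → ℝ}
    (hy : NetIdx b s t m n y) {j i k : Fin s → ℕ} (hj : m - t ≤ ∑ ℓ, j ℓ)
    (hi : i ∈ nablaIdxS b s j) (hk : k ∈ deltaIdxS b s j) :
    ∑ u, |haarPsiS b s j i k (y u)| ≤
      (b:ℝ) ^ s * (b:ℝ) ^ t * (b:ℝ) ^ ((∑ ℓ, (j ℓ : ℝ)) / 2) := by
  calc _ ≤ ∑ u, (b:ℝ) ^ ((∑ ℓ, (j ℓ : ℝ)) / 2) *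
      (if (fun ℓ => cell b (j ℓ - 1) (y u ℓ)) = k then 1 else 0) :=
        Finset.sum_le_sum fun u _ => haarPsiS_abs_le hb hi hk (hy.2.1 u)
    _ ≤ _ := by
        rw [← Finset.mul_sum, mul_comm]
        gcongr
        exact count_le hb hy j hj k

lemma sum_net_psi_zero {b s t m n : ℕ} (hb : 2 ≤ b) {y : Fin n → Fin s → ℝ}
    (hy : NetIdx b s t m n y) {j i k : Fin s → ℕ} (hj : ∑ ℓ, j ℓ ≤ m - t) (hj0 : j ≠ 0)
    (hi : i ∈ nablaIdxS b s j) (hk : k ∈ deltaIdxS b s j) :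
    ∑ u, haarPsiS b s j i k (y u) = 0 := by
  obtain ⟨h1, h2, h3⟩ := hy
  rw [nablaIdxS, Fintype.mem_piFinset] at hi
  rw [deltaIdxS, Fintype.mem_piFinset] at hk
  obtain ⟨ℓ, hℓ⟩ : ∃ ℓ, j ℓ ≠ 0 := by
    by_contra! h
    exact hj0 (funext h)
  obtain ⟨d, hd⟩ := Nat.exists_eq_add_of_le hj
  let J := Function.update j ℓ (j ℓ + d)
  have hJ1 : ∑ u, J u = m - t := by
    have h9 : ∑ u, j u = j ℓ + ∑ x ∈ Finset.univ \ {ℓ}, j x := by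
      rw [← Finset.add_sum_erase _ _ (Finset.mem_univ ℓ), ← Finset.sdiff_singleton_eq_erase]
    rw [Finset.sum_update_of_mem (Finset.mem_univ _)]
    omega
  have hJ2 : ∀ u, j u ≤ J u := by
    intro u
    by_cases hu : u = ℓ
    · subst hu; simp [J]
    · simp [J, hu]
  let A : Finset (Fin s → ℕ) := Fintype.piFinset fun u => Finset.range (b ^ J u)
  have e1 : ∀ u, haarPsiS b s j i k (y u) =
      ∑ a ∈ A, (∏ v, hfun b (j v) (i v) (k v) (J v) (a v)) *
        (if (fun v => cell b (J v) (y u v)) = a then (1:ℝ) else 0) := by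
    intro u
    simp only [mul_ite, mul_one, mul_zero]
    rw [Finset.sum_ite_eq, if_pos]
    · exact Finset.prod_congr rfl fun v _ => haarPsi_eq hb _ _ (hJ2 v) (h2 u v).1 (h2 u v).2
    · rw [Fintype.mem_piFinset]
      exact fun v => Finset.mem_range.2 (cell_lt hb _ (h2 u v).1 (h2 u v).2)
  simp only [e1]
  rw [Finset.sum_comm]
  have e2 : ∀ a ∈ A, ∑ u, (∏ v, hfun b (j v) (i v) (k v) (J v) (a v)) *
        (if (fun v => cell b (J v) (y u v)) = a then (1:ℝ) else 0) =
        (∏ v, hfun b (j v) (i v) (k v) (J v) (a v)) * (b:ℝ) ^ t := by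
    intro a ha
    rw [Fintype.mem_piFinset] at ha
    rw [← Finset.mul_sum, h3 J a hJ1 fun v => Finset.mem_range.1 (ha v)]
  rw [Finset.sum_congr rfl e2, ← Finset.sum_mul, ← Finset.prod_univ_sum,
    Finset.prod_eq_zero (Finset.mem_univ ℓ), zero_mul]
  exact hfun_sum_zero hb hℓ (hJ2 ℓ) (hi ℓ) (hk ℓ)

lemma lpIdx_ne_top {ι : Type*} (p : ℝ≥0∞) (hp : 1 ≤ p) (A : Finset ι) (c : ι → ℝ) :
    lpIdx p A (fun a => ENNReal.ofReal |c a|) ≠ ∞ := by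
  unfold lpIdx
  split_ifs with h
  · refine ne_of_lt ?_
    rw [Finset.sup_lt_iff (by simp)]
    intro a _
    exact ENNReal.ofReal_lt_top
  · refine ENNReal.rpow_ne_top_of_nonneg (by positivity) ?_
    refine ENNReal.sum_ne_top.2 fun a _ => ?_
    exact ENNReal.rpow_ne_top_of_nonneg (by positivity) ENNReal.ofReal_ne_top

lemma lp_bound {ι : Type*} (p : ℝ≥0∞) (hp : 1 ≤ p) (A : Finset ι) (c w : ι → ℝ)
    (hw : ∀ a ∈ A, 0 ≤ w a) {M R : ℝ} (hM : 0 < M) (hR : 0 < R) (hwM : ∀ a ∈ A, w a ≤ M)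
    (hwR : ∑ a ∈ A, w a ≤ R) :
    ∑ a ∈ A, w a * |c a| ≤ R ^ (1 - 1 / p.toReal) * M ^ (1 / p.toReal) *
      (lpIdx p A (fun a => ENNReal.ofReal |c a|)).toReal := by
  have hfin := lpIdx_ne_top p hp A c
  by_cases h : p = ∞
  · subst h
    have hz : 1 / (∞ : ℝ≥0∞).toReal = 0 := by simp
    rw [hz]
    simp only [_root_.sub_zero, Real.rpow_one, Real.rpow_zero, mul_one]
    set S := (lpIdx ∞ A (fun a => ENNReal.ofReal |c a|)).toReal with hS
    have h1 : ∀ a ∈ A, |c a| ≤ S := by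
      intro a ha
      rw [← ENNReal.ofReal_le_iff_le_toReal hfin]
      unfold lpIdx
      rw [if_pos rfl]
      exact Finset.le_sup (f := fun a => ENNReal.ofReal |c a|) ha
    calc _ ≤ ∑ a ∈ A, w a * S := Finset.sum_le_sum fun a ha =>
          mul_le_mul_of_nonneg_left (h1 a ha) (hw a ha)
      _ = (∑ a ∈ A, w a) * S := by rw [Finset.sum_mul]
      _ ≤ _ := by gcongr
  · have hp1 : 1 ≤ p.toReal := by
      rw [← ENNReal.toReal_one]; exact ENNReal.toReal_mono h hp
    have hp0 : 0 < p.toReal := by linarith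
    have e1 : (lpIdx p A (fun a => ENNReal.ofReal |c a|)).toReal =
        (∑ a ∈ A, |c a| ^ p.toReal) ^ (1 / p.toReal) := by
      unfold lpIdx
      rw [if_neg h, ← ENNReal.toReal_rpow, ENNReal.toReal_sum]
      · congr 1
        refine Finset.sum_congr rfl fun a _ => ?_
        rw [← ENNReal.toReal_rpow, ENNReal.toReal_ofReal (abs_nonneg _)]
      · intro a _
        exact ENNReal.rpow_ne_top_of_nonneg (by positivity) ENNReal.ofReal_ne_top
    rw [e1]
    let w' : ι → ℝ := fun a => max (w a) 0
    have hww : ∀ a ∈ A, w' a = w a := fun a ha => max_eq_left (hw a ha)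
    have key := Real.inner_le_weight_mul_Lp_of_nonneg A hp1 w' (fun a => |c a|)
      (fun a => le_max_right _ _) (fun a => abs_nonneg _)
    rw [Finset.sum_congr rfl (fun a ha => by rw [hww a ha]),
      Finset.sum_congr (s₁ := A) rfl hww,
      Finset.sum_congr (s₁ := A) (f := fun a => w' a * |c a| ^ p.toReal) rfl
        (fun a ha => by rw [hww a ha])] at key
    refine key.trans ?_
    rw [mul_assoc, ← Real.mul_rpow hM.le (Finset.sum_nonneg fun a _ => by positivity), one_div]
    have h0 : 0 ≤ ∑ a ∈ A, w a := Finset.sum_nonneg hw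
    have h3 : 0 ≤ ∑ a ∈ A, w a * |c a| ^ p.toReal :=
      Finset.sum_nonneg fun a ha => mul_nonneg (hw a ha) (by positivity)
    have h4 : p.toReal⁻¹ ≤ 1 := inv_le_one_of_one_le₀ hp1
    refine mul_le_mul ?_ ?_ (by positivity) (by positivity)
    · exact Real.rpow_le_rpow h0 hwR (by linarith)
    · refine Real.rpow_le_rpow h3 ?_ (by positivity)
      rw [Finset.mul_sum]
      exact Finset.sum_le_sum fun a ha =>
        mul_le_mul_of_nonneg_right (hwM a ha) (by positivity)

lemma lq_bound {ι : Type*} (q q' : ℝ≥0∞) (hq : 1 ≤ q) (hq' : 1 / q + 1 / q' = 1)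
    (g : ι → ℝ≥0∞) (hg : lqIdx q g ≤ 1) (F : Finset ι) (w : ι → ℝ) (hw : ∀ a, 0 ≤ w a)
    {D : ℝ} (h1 : q = 1 → ∀ a ∈ F, w a ≤ D) (hD : 0 ≤ D)
    (h2 : 1 < q → (∑ a ∈ F, w a ^ (1 / (1 / q').toReal)) ^ (1 / q').toReal ≤ D) :
    ∑ a ∈ F, (g a).toReal * w a ≤ D := by
  by_cases hT : q = ∞
  · subst hT
    have hq1 : 1 / q' = 1 := by simpa using hq'
    have h3 := h2 (by simp)
    rw [hq1] at h3
    simp only [ENNReal.toReal_one, div_one, Real.rpow_one] at h3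
    refine (Finset.sum_le_sum fun a _ => ?_).trans h3
    refine mul_le_of_le_one_left (hw a) ?_
    rw [lqIdx, if_pos rfl] at hg
    have := (le_iSup g a).trans hg
    rw [← ENNReal.toReal_one]
    exact ENNReal.toReal_mono (by simp) this
  · have hq1 : 1 ≤ q.toReal := by
      rw [← ENNReal.toReal_one]; exact ENNReal.toReal_mono hT hq
    have hq0 : 0 < q.toReal := by linarith
    rw [lqIdx, if_neg hT] at hg
    have h3 : ∑' i, g i ^ q.toReal ≤ 1 := by
      by_contra! h
      exact absurd hg (not_le.2 (ENNReal.one_lt_rpow h (by positivity)))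
    have h4 : ∑ a ∈ F, (g a).toReal ^ q.toReal ≤ 1 := by
      have h5 : ∑ a ∈ F, g a ^ q.toReal ≤ 1 := (ENNReal.sum_le_tsum F).trans h3
      have h6 : ∀ a ∈ F, g a ^ q.toReal ≠ ∞ := fun a ha =>
        ((Finset.single_le_sum (f := fun a => g a ^ q.toReal) (fun _ _ => bot_le) ha).trans
          h5).trans_lt (by simp) |>.ne
      have h7 := ENNReal.toReal_mono (by simp) h5
      rw [ENNReal.toReal_sum h6] at h7
      simpa [ENNReal.toReal_rpow] using h7
    rcases hq.eq_or_lt with h | h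
    · subst h
      simp only [ENNReal.toReal_one, Real.rpow_one] at h4
      calc _ ≤ ∑ a ∈ F, (g a).toReal * D := Finset.sum_le_sum fun a ha =>
            mul_le_mul_of_nonneg_left (h1 rfl a ha) ENNReal.toReal_nonneg
        _ = (∑ a ∈ F, (g a).toReal) * D := by rw [Finset.sum_mul]
        _ ≤ 1 * D := by gcongr
        _ = D := one_mul D
    · have hlt : 1 < q.toReal := by
        rw [← ENNReal.toReal_one]; exact (ENNReal.toReal_lt_toReal (by simp) hT).2 h
      have hθ : (1 / q').toReal = 1 - 1 / q.toReal := by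
        have h5 : (1 / q) ≠ ∞ := by
          intro h6; rw [h6] at hq'; simp at hq'
        have h6 : (1 / q') ≠ ∞ := by
          intro h6; rw [h6] at hq'; simp at hq'
        have := congrArg ENNReal.toReal hq'
        rw [ENNReal.toReal_add h5 h6, ENNReal.toReal_one, ENNReal.toReal_div, ENNReal.toReal_one]
          at this
        linarith
      have hc : q.toReal.HolderConjugate (1 / (1 / q').toReal) := by
        rw [Real.holderConjugate_iff]
        refine ⟨hlt, ?_⟩
        rw [hθ]; simp
      have key := Real.inner_le_Lp_mul_Lq_of_nonneg F hc (f := fun a => (g a).toReal) (g := w)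
        (fun a _ => ENNReal.toReal_nonneg) (fun a _ => hw a)
      refine key.trans ?_
      rw [one_div_one_div]
      calc _ ≤ 1 * D := by
            refine mul_le_mul ?_ (h2 h) ?_ zero_le_one
            · exact Real.rpow_le_one (Finset.sum_nonneg fun a _ => by positivity) h4
                (by positivity)
            · exact Real.rpow_nonneg (Finset.sum_nonneg fun a _ =>
                Real.rpow_nonneg (hw a) _) _
        _ = D := one_mul D

lemma card_level_le {s : ℕ} (hs : 1 ≤ s) (F : Finset (Fin s → ℕ)) (L : ℕ) :
    (F.filter (fun j => ∑ ℓ, j ℓ = L)).card ≤ (L + 1) ^ (s - 1) := by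
  obtain ⟨d, rfl⟩ : ∃ d, s = d + 1 := ⟨s - 1, by omega⟩
  have : ((Fintype.piFinset fun _ : Fin d => Finset.range (L + 1)) : Finset _).card =
      (L + 1) ^ (d + 1 - 1) := by simp
  rw [← this]
  refine Finset.card_le_card_of_injOn (fun j => fun u : Fin d => j u.succ) ?_ ?_
  · intro j hj
    simp only [Finset.coe_filter, Set.mem_ofPred_eq] at hj
    simp only [Finset.mem_coe, Fintype.mem_piFinset, Finset.mem_range]
    intro u
    have := Finset.single_le_sum (f := j) (fun _ _ => Nat.zero_le _) (Finset.mem_univ u.succ)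
    omega
  · intro j hj j' hj' h
    simp only [Finset.coe_filter, Set.mem_ofPred_eq] at hj hj'
    have h1 := hj.2
    have h2 := hj'.2
    rw [Fin.sum_univ_succ] at h1 h2
    have h3 : ∀ u : Fin d, j u.succ = j' u.succ := fun u => congrFun h u
    simp only [h3] at h1
    funext v
    refine Fin.cases ?_ ?_ v
    · omega
    · exact h3

lemma geom_bound {s : ℕ} (hs : 1 ≤ s) {r : ℝ} (hr0 : 0 < r) (hr : r < 1) :
    ∃ C > (0:ℝ), ∀ n : ℕ, ∀ F : Finset (Fin s → ℕ), (∀ j ∈ F, n ≤ ∑ ℓ, j ℓ) →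
      ∑ j ∈ F, r ^ (∑ ℓ, j ℓ) ≤ C * r ^ n * ((n:ℝ) + 1) ^ (s - 1) := by
  have hsum : Summable fun L : ℕ => ((L:ℝ) + 1) ^ (s - 1) * r ^ L := by
    have h1 := summable_pow_mul_geometric_of_norm_lt_one (s - 1) (r := r)
      (by rw [Real.norm_eq_abs, abs_of_pos hr0]; exact hr)
    have h2 := (summable_nat_add_iff 1).2 h1
    have h3 := h2.mul_left r⁻¹
    refine h3.congr fun L => ?_
    push_cast
    rw [pow_succ]
    field_simp
  refine ⟨∑' L : ℕ, ((L:ℝ) + 1) ^ (s - 1) * r ^ L, ?_, ?_⟩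
  · refine hsum.tsum_pos (fun L => by positivity) 0 (by simp)
  · intro n F hF
    let I := F.image (fun j => ∑ ℓ, j ℓ)
    have hI : ∀ L ∈ I, n ≤ L := by
      intro L hL
      obtain ⟨j, hj, rfl⟩ := Finset.mem_image.1 hL
      exact hF j hj
    calc ∑ j ∈ F, r ^ (∑ ℓ, j ℓ)
        = ∑ L ∈ I, ∑ j ∈ F.filter (fun j => ∑ ℓ, j ℓ = L), r ^ (∑ ℓ, j ℓ) :=
          (Finset.sum_fiberwise_of_maps_to (fun j hj => Finset.mem_image_of_mem _ hj) _).symm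
      _ ≤ ∑ L ∈ I, ((L:ℝ) + 1) ^ (s - 1) * r ^ L := by
          refine Finset.sum_le_sum fun L _ => ?_
          rw [Finset.sum_congr rfl (fun j hj => by rw [(Finset.mem_filter.1 hj).2]),
            Finset.sum_const, nsmul_eq_mul]
          gcongr
          exact_mod_cast card_level_le hs F L
      _ ≤ ∑ L ∈ I, (r ^ n * ((n:ℝ) + 1) ^ (s - 1)) *
            (((L - n : ℕ):ℝ) + 1) ^ (s - 1) * r ^ (L - n) := by
          refine Finset.sum_le_sum fun L hL => ?_
          obtain ⟨d, rfl⟩ := Nat.exists_eq_add_of_le (hI L hL)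
          rw [Nat.add_sub_cancel_left, pow_add]
          calc _ ≤ (((n:ℝ) + 1) * ((d:ℝ) + 1)) ^ (s - 1) * (r ^ n * r ^ d) := by
                gcongr
                push_cast
                nlinarith [(Nat.cast_nonneg n : (0:ℝ) ≤ n), (Nat.cast_nonneg d : (0:ℝ) ≤ d),
                  mul_nonneg (Nat.cast_nonneg n : (0:ℝ) ≤ n) (Nat.cast_nonneg d : (0:ℝ) ≤ d)]
            _ = _ := by rw [mul_pow]; ring
      _ = (r ^ n * ((n:ℝ) + 1) ^ (s - 1)) *
            ∑ L ∈ I.image (fun L => L - n), ((L:ℝ) + 1) ^ (s - 1) * r ^ L := by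
          rw [Finset.sum_image (s := I), Finset.mul_sum (s := I)]
          · refine Finset.sum_congr rfl fun L _ => by ring
          · intro L hL L' hL' h
            have := hI L hL
            have := hI L' hL'
            simp only at h
            omega
      _ ≤ (r ^ n * ((n:ℝ) + 1) ^ (s - 1)) * ∑' L : ℕ, ((L:ℝ) + 1) ^ (s - 1) * r ^ L := by
          gcongr
          exact hsum.sum_le_tsum _ (fun L _ => by positivity)
      _ = _ := by ring

lemma integral_eq_coef (b s : ℕ) (f : (Fin s → ℝ) → ℝ) :
    ∫ x in cube s, f x = haarCoef b s f 0 0 0 := by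
  unfold haarCoef cube
  have h : (Set.pi Set.univ fun _ : Fin s => Set.Ico (0:ℝ) 1) =ᵐ[volume]
      (Set.Icc (0 : Fin s → ℝ) 1) :=
    Measure.univ_pi_Ico_ae_eq_Icc (f := (0 : Fin s → ℝ)) (g := 1)
  rw [← setIntegral_congr_set h, ← setIntegral_congr_set h]
  refine setIntegral_congr_fun (MeasurableSet.univ_pi fun _ => measurableSet_Ico) ?_
  intro x hx
  simp only
  have : haarPsiS b s 0 0 0 x = 1 := by
    unfold haarPsiS haarPsi
    refine Finset.prod_eq_one fun ℓ _ => ?_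
    rw [if_pos (by rfl), Set.indicator_of_mem (hx ℓ (Set.mem_univ _))]
  rw [this, mul_one]

/-- weighted level norm -/
def lev (b s : ℕ) (α : ℝ) (p : ℝ≥0∞) (f : (Fin s → ℝ) → ℝ) (j : Fin s → ℕ) : ℝ≥0∞ :=
  ENNReal.ofReal ((b : ℝ) ^ ((α - 1 / p.toReal + 1 / 2) * ∑ ℓ, (j ℓ : ℝ))) *
      lpIdx p (deltaIdxS b s j ×ˢ nablaIdxS b s j)
        (fun ki => ENNReal.ofReal |haarCoef b s f j ki.2 ki.1|)

/-- level part of the expansion -/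
def Tj (b s : ℕ) (f : (Fin s → ℝ) → ℝ) (j : Fin s → ℕ) (x : Fin s → ℝ) : ℝ :=
  ∑ k ∈ deltaIdxS b s j, ∑ i ∈ nablaIdxS b s j, haarCoef b s f j i k * haarPsiS b s j i k x

lemma level_bound {b s t m n : ℕ} (hb : 2 ≤ b) {y : Fin n → Fin s → ℝ}
    (hy : NetIdx b s t m n y) (α : ℝ) (p : ℝ≥0∞) (hp : 1 ≤ p) (f : (Fin s → ℝ) → ℝ)
    {j : Fin s → ℕ} (hj : m - t ≤ ∑ ℓ, j ℓ) :
    ∑ u, |Tj b s f j (y u)| ≤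
      (b:ℝ) ^ ((m:ℝ) * (1 - 1 / p.toReal) + s + t * (1 / p.toReal)) *
        ((lev b s α p f j).toReal *
          (b:ℝ) ^ (-(α - 1 / p.toReal) * ((∑ ℓ, j ℓ : ℕ) : ℝ))) := by
  have hb0 : (0:ℝ) < b := by positivity
  set L : ℝ := ∑ ℓ, (j ℓ : ℝ) with hL
  set A := deltaIdxS b s j ×ˢ nablaIdxS b s j with hA
  have h1 : ∑ u, |Tj b s f j (y u)| ≤
      ∑ ki ∈ A, (∑ u, |haarPsiS b s j ki.2 ki.1 (y u)|) * |haarCoef b s f j ki.2 ki.1| := by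
    simp only [Finset.sum_mul]
    rw [Finset.sum_comm (s := A)]
    refine Finset.sum_le_sum fun u _ => ?_
    unfold Tj
    rw [← Finset.sum_product']
    refine (Finset.abs_sum_le_sum_abs _ _).trans (le_of_eq ?_)
    refine Finset.sum_congr rfl fun ki _ => ?_
    rw [abs_mul, mul_comm]
  have h2 := lp_bound p hp A (fun ki => haarCoef b s f j ki.2 ki.1)
    (fun ki => ∑ u, |haarPsiS b s j ki.2 ki.1 (y u)|)
    (fun _ _ => Finset.sum_nonneg fun _ _ => abs_nonneg _)
    (M := (b:ℝ) ^ s * (b:ℝ) ^ t * (b:ℝ) ^ (L / 2))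
    (R := (b:ℝ) ^ m * ((b:ℝ) ^ s * (b:ℝ) ^ (L / 2))) (by positivity) (by positivity)
    (fun ki hki => by
      rw [hA, Finset.mem_product] at hki
      exact sum_net_psi_le hb hy hj hki.2 hki.1)
    (by
      rw [Finset.sum_comm]
      calc _ ≤ ∑ u : Fin n, ((b:ℝ) ^ s * (b:ℝ) ^ (L / 2)) :=
            Finset.sum_le_sum fun u _ => sum_psi_le hb j (hy.2.1 u)
        _ = _ := by
            rw [Finset.sum_const, Finset.card_univ, Fintype.card_fin, nsmul_eq_mul, hy.1]
            push_cast; rfl)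
  refine (h1.trans h2).trans (le_of_eq ?_)
  unfold lev
  rw [ENNReal.toReal_mul, ENNReal.toReal_ofReal (by positivity), ← hA, ← hL]
  push_cast
  rw [← hL]
  simp only [← Real.rpow_natCast, ← Real.rpow_add hb0, ← Real.rpow_mul hb0.le]
  set X := (lpIdx p A (fun ki => ENNReal.ofReal |haarCoef b s f j ki.2 ki.1|)).toReal
  set π' := 1 / p.toReal
  calc _ = (b:ℝ) ^ ((↑m * (1 - π') + ↑s + ↑t * π') + (α - π' + 1 / 2) * L + -(α - π') * L) * X := by
        congr 2
        ring
    _ = _ := by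
        rw [Real.rpow_add hb0, Real.rpow_add hb0]
        ring

lemma tail_bound (b s t : ℕ) (hb : 2 ≤ b) (hs : 1 ≤ s)
    (p q q' : ℝ≥0∞) (hq : 1 ≤ q) (hq' : 1 / q + 1 / q' = 1)
    (α : ℝ) (hα1 : q = 1 → 1 / p.toReal ≤ α) (hα2 : 1 < q → 1 / p.toReal < α) :
    ∃ C > (0:ℝ), ∀ m : ℕ, max 1 t ≤ m → ∀ f : (Fin s → ℝ) → ℝ, wavNorm b s α p q f ≤ 1 →
      ∀ F : Finset (Fin s → ℕ), (∀ j ∈ F, m - t ≤ ∑ ℓ, j ℓ) →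
      ∑ j ∈ F, (lev b s α p f j).toReal *
          (b:ℝ) ^ (-(α - 1 / p.toReal) * ((∑ ℓ, j ℓ : ℕ) : ℝ)) ≤
        C * (b:ℝ) ^ (-(α - 1 / p.toReal) * (m:ℝ)) *
          Real.log ((b : ℝ) ^ m) ^ ((s - 1 : ℝ) * (1 / q').toReal) := by
  have hb0 : (0:ℝ) < b := by positivity
  have hb1 : (1:ℝ) < b := by exact_mod_cast (by omega : 1 < b)
  set δ := α - 1 / p.toReal with hδ
  set θ := (1 / q').toReal with hθ
  rcases hq.eq_or_lt with h | h
  · have hθ0 : θ = 0 := by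
      rw [← h] at hq'
      have h5 : (1 / q') = 0 := by
        have : (1:ℝ≥0∞) + 1 / q' = 1 + 0 := by simpa using hq'
        exact (ENNReal.add_right_inj (by simp)).1 this
      rw [hθ, h5, ENNReal.toReal_zero]
    have hδ0 : 0 ≤ δ := by have := hα1 h.symm; linarith
    refine ⟨(b:ℝ) ^ (δ * t), by positivity, fun m hm f hf F hF => ?_⟩
    have htm : t ≤ m := (le_max_right _ _).trans hm
    rw [hθ0, mul_zero, Real.rpow_zero, mul_one, ← Real.rpow_add hb0]
    refine lq_bound q q' hq hq' _ hf F _ (fun _ => by positivity) (fun _ j hj => ?_)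
      (by positivity) (fun h6 => absurd h h6.ne)
    refine Real.rpow_le_rpow_of_exponent_le hb1.le ?_
    have h7 : (m:ℝ) - t ≤ ((∑ ℓ, j ℓ : ℕ):ℝ) := by
      rw [← Nat.cast_sub htm]
      exact_mod_cast hF j hj
    nlinarith
  · have hδ0 : 0 < δ := by have := hα2 h; linarith
    have hθ0 : 0 < θ := by
      have h5 : (1 / q) < 1 := by
        rw [one_div, ENNReal.inv_lt_one]; exact h
      have h6 : (1 / q') ≠ ∞ := by
        intro h6; rw [h6] at hq'; simp at hq'
      refine ENNReal.toReal_pos ?_ h6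
      intro h7
      rw [h7, add_zero] at hq'
      exact h5.ne hq'
    have hr1 : (b:ℝ) ^ (-δ / θ) < 1 := by
      refine Real.rpow_lt_one_of_one_lt_of_neg hb1 ?_
      exact div_neg_of_neg_of_pos (by linarith) hθ0
    obtain ⟨C0, hC0, hC⟩ := geom_bound hs (r := (b:ℝ) ^ (-δ / θ)) (by positivity) hr1
    have hlog : 0 < Real.log b := Real.log_pos hb1
    refine ⟨C0 ^ θ * (b:ℝ) ^ (δ * t) * (2 / Real.log b) ^ ((s - 1 : ℝ) * θ), by positivity,
      fun m hm f hf F hF => ?_⟩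
    have htm : t ≤ m := (le_max_right _ _).trans hm
    have h1m : 1 ≤ m := (le_max_left _ _).trans hm
    have h1m' : (1:ℝ) ≤ m := by exact_mod_cast h1m
    have hs' : (0:ℝ) ≤ (s:ℝ) - 1 := by
      have : (1:ℝ) ≤ s := by exact_mod_cast hs
      linarith
    have hlm : 0 ≤ Real.log ((b:ℝ) ^ m) := by rw [Real.log_pow]; positivity
    refine lq_bound q q' hq hq' _ hf F _ (fun _ => by positivity) (fun h6 => absurd h6.symm h.ne)
      (by positivity) (fun _ => ?_)
    have e1 : ∀ j : Fin s → ℕ, ((b:ℝ) ^ (-δ * ((∑ ℓ, j ℓ : ℕ):ℝ))) ^ (1 / θ) =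
        ((b:ℝ) ^ (-δ / θ)) ^ (∑ ℓ, j ℓ) := by
      intro j
      rw [← Real.rpow_mul hb0.le, ← Real.rpow_natCast, ← Real.rpow_mul hb0.le]
      congr 1
      ring
    rw [← hθ]
    simp only [e1]
    calc _ ≤ (C0 * ((b:ℝ) ^ (-δ / θ)) ^ (m - t) * (((m - t : ℕ):ℝ) + 1) ^ (s - 1)) ^ θ :=
          Real.rpow_le_rpow (Finset.sum_nonneg fun _ _ => by positivity) (hC _ F hF) hθ0.le
      _ = C0 ^ θ * (b:ℝ) ^ (-δ * (m - t)) * (((m - t : ℕ):ℝ) + 1) ^ (((s:ℝ) - 1) * θ) := by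
          rw [Real.mul_rpow (by positivity) (by positivity),
            Real.mul_rpow (by positivity) (by positivity)]
          congr 1
          · congr 1
            rw [← Real.rpow_natCast, ← Real.rpow_mul hb0.le, ← Real.rpow_mul hb0.le,
              Nat.cast_sub htm]
            congr 1
            field_simp
          · rw [← Real.rpow_natCast, ← Real.rpow_mul (by positivity), Nat.cast_sub hs]
            push_cast; rfl
      _ ≤ C0 ^ θ * (b:ℝ) ^ (-δ * (m - t)) *
            (2 / Real.log b * Real.log ((b:ℝ) ^ m)) ^ (((s:ℝ) - 1) * θ) := by
          gcongr
          rw [Real.log_pow]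
          have : 2 / Real.log b * (m * Real.log b) = 2 * m := by field_simp
          rw [this, Nat.cast_sub htm]
          have : (0:ℝ) ≤ t := Nat.cast_nonneg t
          linarith
      _ = _ := by
          rw [Real.mul_rpow (by positivity) hlm,
            show -δ * ((m:ℝ) - t) = δ * t + -δ * m by ring, Real.rpow_add hb0]
          ring

lemma Tj_zero {b s : ℕ} (f : (Fin s → ℝ) → ℝ) {x : Fin s → ℝ}
    (hx : ∀ ℓ, 0 ≤ x ℓ ∧ x ℓ < 1) : Tj b s f 0 x = haarCoef b s f 0 0 0 := by
  have h1 : deltaIdxS b s 0 = {0} := by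
    ext k; simp [deltaIdxS, deltaIdx, Fintype.mem_piFinset, funext_iff]
  have h2 : nablaIdxS b s 0 = {0} := by
    ext k; simp [nablaIdxS, nablaIdx, Fintype.mem_piFinset, funext_iff]
  have h3 : haarPsiS b s 0 0 0 x = 1 := by
    unfold haarPsiS haarPsi
    refine Finset.prod_eq_one fun ℓ _ => ?_
    rw [if_pos (by rfl), Set.indicator_of_mem (show x ℓ ∈ Set.Ico (0:ℝ) 1 from hx ℓ)]
  simp [Tj, h1, h2, h3]

lemma Tj_sum_zero {b s t m n : ℕ} (hb : 2 ≤ b) {y : Fin n → Fin s → ℝ}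
    (hy : NetIdx b s t m n y) (f : (Fin s → ℝ) → ℝ) {j : Fin s → ℕ} (hj : ∑ ℓ, j ℓ ≤ m - t)
    (hj0 : j ≠ 0) : ∑ u, Tj b s f j (y u) = 0 := by
  unfold Tj
  rw [Finset.sum_comm]
  refine Finset.sum_eq_zero fun k hk => ?_
  rw [Finset.sum_comm]
  refine Finset.sum_eq_zero fun i hi => ?_
  rw [← Finset.mul_sum, sum_net_psi_zero hb hy hj hj0 hi hk, mul_zero]

lemma error_bound {b s t m n : ℕ} (hb : 2 ≤ b) {y : Fin n → Fin s → ℝ}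
    (hy : NetIdx b s t m n y) (f : (Fin s → ℝ) → ℝ) {B : ℝ}
    (hB : ∀ F : Finset (Fin s → ℕ), (∀ j ∈ F, m - t ≤ ∑ ℓ, j ℓ) →
      ∑ j ∈ F, ∑ u, |Tj b s f j (y u)| ≤ B) :
    |(∫ x in cube s, f x) - ((b : ℝ) ^ m)⁻¹ * ∑ u, wavExp b s f (y u)| ≤
      ((b : ℝ) ^ m)⁻¹ * B := by
  classical
  have hb0 : (0:ℝ) < b := by positivity
  let G : (Fin s → ℕ) → ℝ := fun j =>
    if m - t < ∑ ℓ, j ℓ then ∑ u, |Tj b s f j (y u)| else 0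
  have hG0 : ∀ j, 0 ≤ G j := by
    intro j; simp only [G]; split_ifs
    · exact Finset.sum_nonneg fun _ _ => abs_nonneg _
    · exact le_rfl
  have hGB : ∀ F : Finset (Fin s → ℕ), ∑ j ∈ F, G j ≤ B := by
    intro F
    simp only [G]
    rw [← Finset.sum_filter]
    exact hB _ fun j hj => (Finset.mem_filter.1 hj).2.le
  have hGs : Summable G := summable_of_sum_le hG0 hGB
  have hfin : {j : Fin s → ℕ | ∑ ℓ, j ℓ ≤ m - t}.Finite := by
    refine (Set.finite_Iic (fun _ : Fin s => m - t)).subset ?_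
    intro j hj ℓ
    exact (Finset.single_le_sum (f := j) (fun _ _ => Nat.zero_le _) (Finset.mem_univ ℓ)).trans hj
  have hTs : ∀ u, Summable fun j => Tj b s f j (y u) := by
    intro u
    refine Summable.of_norm_bounded_eventually hGs ?_
    filter_upwards [hfin.compl_mem_cofinite] with j hj
    have hj' : m - t < ∑ ℓ, j ℓ := by
      by_contra h; exact hj (not_lt.1 h)
    simp only [G, if_pos hj', Real.norm_eq_abs]
    exact Finset.single_le_sum (f := fun u => |Tj b s f j (y u)|) (fun _ _ => abs_nonneg _)
      (Finset.mem_univ u)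
  have e1 : ∑ u, wavExp b s f (y u) = ∑' j, ∑ u, Tj b s f j (y u) :=
    (Summable.tsum_finsetSum fun u _ => hTs u).symm
  have hHs : Summable fun j => ∑ u, Tj b s f j (y u) := summable_sum fun u _ => hTs u
  have e2 := hHs.tsum_eq_add_tsum_ite 0
  have e3 : ∑ u, Tj b s f 0 (y u) = (b:ℝ) ^ m * ∫ x in cube s, f x := by
    rw [integral_eq_coef b, Finset.sum_congr rfl fun u _ => Tj_zero f (hy.2.1 u),
      Finset.sum_const, Finset.card_univ, Fintype.card_fin, nsmul_eq_mul, hy.1]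
    push_cast; rfl
  have hle : ∀ j, ‖(if j = 0 then 0 else ∑ u, Tj b s f j (y u))‖ ≤ G j := by
    intro j
    split_ifs with h
    · simpa using hG0 j
    · by_cases h1 : m - t < ∑ ℓ, j ℓ
      · simp only [G, if_pos h1, Real.norm_eq_abs]
        exact Finset.abs_sum_le_sum_abs _ _
      · rw [Tj_sum_zero hb hy f (not_lt.1 h1) h]
        simpa using hG0 j
  have h5 := tsum_of_norm_bounded hGs.hasSum hle
  have h6 : ∑' j, G j ≤ B := hGs.tsum_le_of_sum_le hGB
  rw [e1, e2, e3, mul_add, inv_mul_cancel_left₀ (by positivity), sub_add_cancel_left, abs_neg,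
    abs_mul, abs_of_pos (by positivity)]
  gcongr
  exact h5.trans h6

/-- QMC rules based on arbitrary `(t,m,s)`-nets achieve the convergence rate
`N^{-α} (ln N)^{(s-1)/q'}` on the Haar wavelet space `H_{wav,α,s,p,q}`. -/
theorem net_upper_bound_Haar (b s t : ℕ) (hb : 2 ≤ b) (hs : 1 ≤ s)
    (p q q' : ℝ≥0∞) (hp : 1 ≤ p) (hq : 1 ≤ q) (hq' : 1 / q + 1 / q' = 1)
    (α : ℝ) (hα1 : q = 1 → 1 / p.toReal ≤ α) (hα2 : 1 < q → 1 / p.toReal < α) :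
    ∃ C > (0:ℝ), ∀ m : ℕ, max 1 t ≤ m → ∀ P : Multiset (Fin s → ℝ), IsNet b s t m P →
      ∀ f : (Fin s → ℝ) → ℝ, Integrable f (volume.restrict (cube s)) →
        wavNorm b s α p q f ≤ 1 →
        |(∫ x in cube s, f x) - ((b : ℝ) ^ m)⁻¹ * (P.map (wavExp b s f)).sum| ≤
          C * ((b : ℝ) ^ m) ^ (-α) * Real.log ((b : ℝ) ^ m) ^ ((s - 1 : ℝ) * (1 / q').toReal) := by
  have hb0 : (0:ℝ) < b := by positivity
  obtain ⟨C, hC0, hC⟩ := tail_bound b s t hb hs p q q' hq hq' α hα1 hα2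
  refine ⟨(b:ℝ) ^ ((s:ℝ) + t * (1 / p.toReal)) * C, by positivity, fun m hm P hP f _ hf => ?_⟩
  obtain ⟨n, y, hy, hsum⟩ := net_exists hb hP
  rw [hsum]
  refine (error_bound hb hy f (B := (b:ℝ) ^ ((m:ℝ) * (1 - 1 / p.toReal) + s + t * (1 / p.toReal)) *
    (C * (b:ℝ) ^ (-(α - 1 / p.toReal) * (m:ℝ)) *
          Real.log ((b : ℝ) ^ m) ^ ((s - 1 : ℝ) * (1 / q').toReal))) ?_).trans (le_of_eq ?_)
  · intro F hF
    calc _ ≤ ∑ j ∈ F, (b:ℝ) ^ ((m:ℝ) * (1 - 1 / p.toReal) + s + t * (1 / p.toReal)) *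
        ((lev b s α p f j).toReal *
          (b:ℝ) ^ (-(α - 1 / p.toReal) * ((∑ ℓ, j ℓ : ℕ) : ℝ))) :=
          Finset.sum_le_sum fun j hj => level_bound hb hy α p hp f (hF j hj)
      _ ≤ _ := by
          rw [← Finset.mul_sum]
          gcongr
          exact hC m hm f hf F hF
  · set Λ := Real.log ((b : ℝ) ^ m) ^ ((s - 1 : ℝ) * (1 / q').toReal)
    set π' := 1 / p.toReal
    have e1 : ((b:ℝ) ^ m)⁻¹ = (b:ℝ) ^ (-(m:ℝ)) := by
      rw [Real.rpow_neg hb0.le, Real.rpow_natCast]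
    have e2 : ((b:ℝ) ^ m) ^ (-α) = (b:ℝ) ^ ((m:ℝ) * (-α)) := by
      rw [Real.rpow_mul hb0.le, Real.rpow_natCast]
    rw [e1, e2]
    calc _ = ((b:ℝ) ^ (-(m:ℝ)) * (b:ℝ) ^ ((m:ℝ) * (1 - π') + s + t * π') *
          (b:ℝ) ^ (-(α - π') * (m:ℝ))) * (C * Λ) := by ring
      _ = ((b:ℝ) ^ ((s:ℝ) + t * π') * (b:ℝ) ^ ((m:ℝ) * (-α))) * (C * Λ) := by
          rw [← Real.rpow_add hb0, ← Real.rpow_add hb0, ← Real.rpow_add hb0]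
          congr 2
          ring
      _ = _ := by ring

end
end

section
/- Fix an integer base b ≥ 2, p, q ∈ [1,∞], and α with α ≥ 1/p if q = 1 and α > 1/p if q > 1. Set C_{b,α,p,q} = b^{1/p′} (1 − b^{−q′(α−1/p)})^{−1/q′}, where p′, q′ are the conjugate exponents of p, q (with the convention r^{1/∞} = 1). Let f ∈ L_1([0,1]) satisfy ‖f‖_{wav,α,p,q} < ∞. Then for every x ∈ [0,1] the series Σ_{j=0}^∞ Σ_{k∈Δ_{j−1}} Σ_{i∈∇_j} ⟨f,ψ^j_{i,k}⟩ ψ^j_{i,k}(x) converges absolutely, with Σ_{j=0}^∞ Σ_{k∈Δ_{j−1}} Σ_{i∈∇_j} |⟨f,ψ^j_{i,k}⟩| |ψ^j_{i,k}(x)| ≤ C_{b,α,p,q} ‖f‖_{wav,α,p,q}, and the sum S(f)(x) of the series equals f(x) for almost every x ∈ [0,1]. -/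
open MeasureTheory ENNReal Set

noncomputable section

/-- The Haar coefficient `⟨f, ψ^j_{i,k}⟩ = ∫_0^1 f ψ^j_{i,k}`. -/
def haarCoefU (b : ℕ) (f : ℝ → ℝ) (j i k : ℕ) : ℝ :=
  ∫ x in Set.Icc (0:ℝ) 1, f x * haarPsi b j i k x

/-- The univariate Haar wavelet norm `‖f‖_{wav,α,p,q}`. -/
def wavNormU (b : ℕ) (α : ℝ) (p q : ℝ≥0∞) (f : ℝ → ℝ) : ℝ≥0∞ :=
  lqIdx q fun j : ℕ =>
    ENNReal.ofReal ((b : ℝ) ^ ((α - 1 / p.toReal + 1 / 2) * (j : ℝ))) *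
      lpIdx p (deltaIdx b j ×ˢ nablaIdx b j)
        (fun ki => ENNReal.ofReal |haarCoefU b f j ki.2 ki.1|)

/-- The pointwise wavelet expansion `S(f)`. -/
def wavExpU (b : ℕ) (f : ℝ → ℝ) (x : ℝ) : ℝ :=
  ∑' j : ℕ, ∑ k ∈ deltaIdx b j, ∑ i ∈ nablaIdx b j,
    haarCoefU b f j i k * haarPsi b j i k x

/-- The constant `C_{b,α,p,q} = b^{1/p'} (1 - b^{-q'(α-1/p)})^{-1/q'}` (with the conventions
`1/∞ = 0` and `r^{1/∞} = r^0 = 1`, so that `C = b^{1/p'}` when `q' = ∞`). -/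
def Cconst (b : ℕ) (α : ℝ) (p p' q' : ℝ≥0∞) : ℝ :=
  (b : ℝ) ^ ((1 / p').toReal) *
    (1 - (b : ℝ) ^ (-(q'.toReal) * (α - 1 / p.toReal))) ^ (-(1 / q'.toReal))

lemma aux_mem_Ico {N : ℝ} (hN : 0 < N) {x : ℝ} (hx : 0 ≤ x) (m : ℕ) :
    x ∈ Set.Ico (N⁻¹ * m) (N⁻¹ * (m + 1)) ↔ ⌊N * x⌋₊ = m := by
  rw [Nat.floor_eq_iff (by positivity), Set.mem_Ico, inv_mul_le_iff₀ hN, lt_inv_mul_iff₀ hN]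

lemma aux_floor (b n : ℕ) (hb : 2 ≤ b) (x : ℝ) :
    ⌊(b:ℝ) ^ n * x⌋₊ = ⌊(b:ℝ) ^ (n+1) * x⌋₊ / b := by
  rw [← Nat.floor_div_natCast]
  congr 1
  have : (b:ℝ) ≠ 0 := by positivity
  rw [pow_succ]
  field_simp

lemma aux_psi_eq (b n i k : ℕ) (hb : 2 ≤ b) (x : ℝ) :
    haarPsi b (n+1) i k x = (b : ℝ) ^ (((n+1 : ℕ) : ℝ) / 2 - 1) *
    ((b : ℝ) * (Set.Ico (((b:ℝ) ^ (n+1))⁻¹ * ((b * k + i : ℕ) : ℝ))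
          (((b:ℝ) ^ (n+1))⁻¹ * ((b * k + i : ℕ) + 1 : ℝ))).indicator (fun _ => (1:ℝ)) x
      - (Set.Ico (((b:ℝ) ^ n)⁻¹ * k) (((b:ℝ) ^ n)⁻¹ * (k + 1))).indicator (fun _ => (1:ℝ)) x) := by
  have h0 : (0:ℝ) ≤ b := by positivity
  have h1 : (b:ℝ) ^ (-((n+1 : ℕ):ℝ)) = ((b:ℝ) ^ (n+1))⁻¹ := by
    rw [Real.rpow_neg h0, Real.rpow_natCast]
  have h2 : (b:ℝ) ^ (1 - ((n+1 : ℕ):ℝ)) = ((b:ℝ) ^ n)⁻¹ := by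
    rw [← Real.rpow_natCast, ← Real.rpow_neg h0]
    congr 1; push_cast; ring
  simp only [haarPsi, Nat.add_eq_zero_iff, one_ne_zero, and_false, if_false]
  rw [h1, h2]
  push_cast
  rfl

lemma aux_psi (b n i k : ℕ) (hb : 2 ≤ b) {x : ℝ} (hx : 0 ≤ x) :
    haarPsi b (n+1) i k x = (b : ℝ) ^ (((n+1 : ℕ) : ℝ) / 2 - 1) *
    ((b : ℝ) * (if ⌊(b:ℝ) ^ (n+1) * x⌋₊ = b * k + i then 1 else 0)
      - (if ⌊(b:ℝ) ^ n * x⌋₊ = k then 1 else 0)) := by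
  rw [aux_psi_eq b n i k hb]
  simp only [Set.indicator_apply]
  simp only [aux_mem_Ico (show (0:ℝ) < (b:ℝ)^(n+1) by positivity) hx,
    aux_mem_Ico (show (0:ℝ) < (b:ℝ)^n by positivity) hx]

lemma aux_psi_zero (b n i k : ℕ) (hb : 2 ≤ b) {x : ℝ} (hx : 0 ≤ x) (hi : i < b)
    (hk : ⌊(b:ℝ) ^ n * x⌋₊ ≠ k) : haarPsi b (n+1) i k x = 0 := by
  rw [aux_psi b n i k hb hx, if_neg hk, if_neg]
  · simp
  · intro h
    apply hk
    rw [aux_floor b n hb, h, Nat.mul_add_div (by omega), Nat.div_eq_of_lt hi]; simp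

lemma aux_psi_le (b j i k : ℕ) (hb : 2 ≤ b) {x : ℝ} (hx : 0 ≤ x) :
    |haarPsi b j i k x| ≤ (b:ℝ) ^ ((j:ℝ) / 2) := by
  cases j with
  | zero =>
    simp only [haarPsi, if_true, Set.indicator_apply]
    split_ifs <;> simp
  | succ n =>
    have hb' : (2:ℝ) ≤ b := by exact_mod_cast hb
    rw [aux_psi b n i k hb hx, abs_mul, abs_of_nonneg (by positivity)]
    have : (b:ℝ) ^ (((n+1:ℕ):ℝ) / 2) = (b : ℝ) ^ (((n+1 : ℕ) : ℝ) / 2 - 1) * b := by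
      rw [Real.rpow_sub_one (by positivity)]; field_simp
    rw [this]
    gcongr
    rw [abs_le]
    split_ifs <;> constructor <;> simp <;> linarith

lemma aux_lp (p p' : ℝ≥0∞) (hp : 1 ≤ p) (hp' : 1 / p + 1 / p' = 1) {ι : Type*} (A : Finset ι)
    (g : ι → ℝ≥0∞) : ∑ a ∈ A, g a ≤ (A.card : ℝ≥0∞) ^ ((1 / p').toReal) * lpIdx p A g := by
  unfold lpIdx
  split_ifs with h
  · subst h
    have : p' = 1 := by simpa using hp'
    subst this
    simp only [div_one, ENNReal.toReal_one, ENNReal.rpow_one]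
    rw [← nsmul_eq_mul]
    exact Finset.sum_le_card_nsmul _ _ _ fun a ha => Finset.le_sup ha
  · have h1 : 1 ≤ p.toReal := by
      rw [← ENNReal.toReal_one]; exact ENNReal.toReal_mono h hp
    have h2 : (1/p').toReal = 1 - 1 / p.toReal := by
      have h3 : 1 / p' ≠ ∞ := by
        intro h; rw [h] at hp'; simp at hp'
      have h4 : 1 / p ≠ ∞ := by
        intro h; rw [h] at hp'; simp at hp'
      have := congrArg ENNReal.toReal hp'
      rw [ENNReal.toReal_add h4 h3] at this
      simp at this ⊢
      linarith
    have := ENNReal.rpow_sum_le_const_mul_sum_rpow A g h1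
    have h0 : 0 < p.toReal := by linarith
    have := ENNReal.rpow_le_rpow this (z := 1 / p.toReal) (by positivity)
    rw [← ENNReal.rpow_mul, mul_one_div_cancel h0.ne', ENNReal.rpow_one,
      ENNReal.mul_rpow_of_nonneg _ _ (by positivity), ← ENNReal.rpow_mul] at this
    convert this using 3
    rw [h2]; field_simp

lemma aux_lp_mono (p : ℝ≥0∞) {ι κ : Type*} (A : Finset ι) (B : Finset κ)
    (g : κ → ℝ≥0∞) (φ : ι ↪ κ) (h : A.map φ ⊆ B) :
    lpIdx p A (fun i => g (φ i)) ≤ lpIdx p B g := by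
  unfold lpIdx
  split_ifs with hp
  · apply Finset.sup_le
    intro a ha
    exact Finset.le_sup (f := g) (h (Finset.mem_map_of_mem _ ha))
  · apply ENNReal.rpow_le_rpow _ (by positivity)
    rw [← Finset.sum_map A φ (fun a => g a ^ p.toReal)]
    exact Finset.sum_le_sum_of_subset h

lemma aux_level (b j : ℕ) (hb : 2 ≤ b) (p p' : ℝ≥0∞) (hp : 1 ≤ p) (hp' : 1 / p + 1 / p' = 1)
    (c : ℕ → ℕ → ℝ) {x : ℝ} (hx : 0 ≤ x) :
    ENNReal.ofReal (∑ k ∈ deltaIdx b j, ∑ i ∈ nablaIdx b j, |c i k| * |haarPsi b j i k x|) ≤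
      ENNReal.ofReal ((b:ℝ) ^ ((1 / p').toReal)) * (ENNReal.ofReal ((b:ℝ) ^ ((j:ℝ) / 2)) *
      lpIdx p (deltaIdx b j ×ˢ nablaIdx b j) (fun ki => ENNReal.ofReal |c ki.2 ki.1|)) := by
  obtain ⟨k0, hk0⟩ : ∃ k0, ∀ k ∈ deltaIdx b j, k ≠ k0 → ∀ i ∈ nablaIdx b j,
      haarPsi b j i k x = 0 := by
    cases j with
    | zero => exact ⟨0, by simp [deltaIdx]⟩
    | succ n =>
      refine ⟨⌊(b:ℝ) ^ n * x⌋₊, fun k _ hk i hi => aux_psi_zero b n i k hb hx ?_ hk.symm⟩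
      simpa [nablaIdx] using hi
  by_cases hm : k0 ∈ deltaIdx b j
  · rw [Finset.sum_eq_single_of_mem k0 hm]
    · have hcard : ((nablaIdx b j).card : ℝ≥0∞) ≤ b := by
        unfold nablaIdx; split_ifs <;> simp; omega
      calc _ ≤ ENNReal.ofReal (∑ i ∈ nablaIdx b j, |c i k0| * (b:ℝ) ^ ((j:ℝ) / 2)) := by
            apply ENNReal.ofReal_le_ofReal
            gcongr
            exact aux_psi_le _ _ _ _ hb hx
        _ = ENNReal.ofReal ((b:ℝ) ^ ((j:ℝ) / 2)) * ∑ i ∈ nablaIdx b j, ENNReal.ofReal |c i k0| := by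
            rw [← Finset.sum_mul, mul_comm, ENNReal.ofReal_mul (by positivity),
              ENNReal.ofReal_sum_of_nonneg (fun _ _ => abs_nonneg _)]
        _ ≤ ENNReal.ofReal ((b:ℝ) ^ ((j:ℝ) / 2)) * (ENNReal.ofReal ((b:ℝ) ^ ((1 / p').toReal)) *
              lpIdx p (deltaIdx b j ×ˢ nablaIdx b j) (fun ki => ENNReal.ofReal |c ki.2 ki.1|)) := by
            gcongr
            refine (aux_lp p p' hp hp' _ _).trans ?_
            gcongr
            · rw [← ENNReal.ofReal_rpow_of_nonneg (by positivity) (by positivity)]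
              apply ENNReal.rpow_le_rpow _ (by positivity)
              simpa using hcard
            · refine aux_lp_mono p _ _ (fun ki : ℕ × ℕ => ENNReal.ofReal |c ki.2 ki.1|)
                ⟨fun i => (k0, i), fun a b h => by simpa using h⟩ ?_
              intro y hy
              obtain ⟨a, ha, rfl⟩ := Finset.mem_map.1 hy
              exact Finset.mem_product.2 ⟨hm, ha⟩
        _ = _ := by ring
    · intro k hk hne
      exact Finset.sum_eq_zero fun i hi => by simp [hk0 k hk hne i hi]
  · rw [Finset.sum_eq_zero]
    · simp
    · intro k hk
      exact Finset.sum_eq_zero fun i hi => by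
        simp [hk0 k hk (fun h => hm (h ▸ hk)) i hi]

lemma aux_holder (b : ℕ) (hb : 2 ≤ b) (q q' : ℝ≥0∞) (hq : 1 ≤ q) (hq' : 1 / q + 1 / q' = 1)
    (s : ℝ) (h1 : q = 1 → 0 ≤ s) (h2 : 1 < q → 0 < s) (N : ℕ → ℝ≥0∞) :
    ∑' j : ℕ, ENNReal.ofReal ((b:ℝ) ^ (-s * j)) * N j ≤
      ENNReal.ofReal ((1 - (b : ℝ) ^ (-(q'.toReal) * s)) ^ (-(1 / q'.toReal))) * lqIdx q N := by
  have hb0 : (0:ℝ) ≤ b := by positivity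
  have hb1 : (1:ℝ) < b := by exact_mod_cast (by omega : 1 < b)
  have geo : ∀ t : ℝ, 0 < t → ∑' j : ℕ, ENNReal.ofReal ((b:ℝ) ^ (-t * j)) =
      ENNReal.ofReal ((1 - (b:ℝ) ^ (-t))⁻¹) := by
    intro t ht
    have hlt : (b:ℝ) ^ (-t) < 1 := Real.rpow_lt_one_of_one_lt_of_neg hb1 (by linarith)
    have : ∀ j : ℕ, (b:ℝ) ^ (-t * j) = ((b:ℝ) ^ (-t)) ^ j := fun j => by
      rw [Real.rpow_mul hb0, Real.rpow_natCast]
    simp_rw [this]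
    rw [← ENNReal.ofReal_tsum_of_nonneg (fun _ => by positivity)
      (summable_geometric_of_lt_one (by positivity) hlt),
      tsum_geometric_of_lt_one (by positivity) hlt]
  rcases hq.eq_or_lt with h | h
  · subst h
    have : q' = ∞ := by
      have : 1 / q' = 0 := by
        have h : (1:ℝ≥0∞) + 1 / q' = 1 + 0 := by simpa using hq'
        exact (ENNReal.add_right_inj (by simp)).1 h
      simpa using this
    subst this
    simp only [lqIdx, ENNReal.one_ne_top, if_false]
    have z : ((1:ℝ) / 0) = 0 := div_zero 1
    simp only [ENNReal.toReal_one, ENNReal.rpow_one, ENNReal.toReal_top, z, neg_zero, Real.rpow_zero, ENNReal.ofReal_one, one_mul, div_one]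
    apply ENNReal.tsum_le_tsum
    intro j
    have : ENNReal.ofReal ((b:ℝ) ^ (-s * j)) ≤ 1 := by
      rw [ENNReal.ofReal_le_one]
      exact Real.rpow_le_one_of_one_le_of_nonpos hb1.le (by
        have := h1 rfl
        have : 0 ≤ s * j := by positivity
        linarith)
    calc _ ≤ 1 * N j := by gcongr
      _ = _ := one_mul _
  · have hs := h2 h
    by_cases hqt : q = ∞
    · subst hqt
      have : q' = 1 := by simpa using hq'
      subst this
      simp only [lqIdx, if_true]
      simp only [ENNReal.toReal_one, div_one, neg_mul, one_mul]
      have := geo s hs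
      rw [Real.rpow_neg_one, ← this, ← ENNReal.tsum_mul_right]
      apply ENNReal.tsum_le_tsum
      intro j
      simp only [neg_mul]
      gcongr
      exact le_iSup N j
    · have hq1 : 1 < q.toReal := by
        rw [← ENNReal.toReal_one]; exact (ENNReal.toReal_lt_toReal (by simp) hqt).2 h
      have hc : q.toReal.HolderConjugate q'.toReal := by
        have h3 : 1 / q' ≠ ∞ := by
          intro h; rw [h] at hq'; simp at hq'
        have h4 : 1 / q ≠ ∞ := by
          intro h; rw [h] at hq'; simp at hq'
        have := congrArg ENNReal.toReal hq'
        rw [ENNReal.toReal_add h4 h3] at this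
        rw [Real.holderConjugate_iff]
        refine ⟨hq1, ?_⟩
        simpa using this
      have hq'0 := hc.symm.pos
      have H := ENNReal.lintegral_mul_le_Lp_mul_Lq (Measure.count : Measure ℕ) hc.symm
        (f := fun j => ENNReal.ofReal ((b:ℝ) ^ (-s * j))) (g := N)
        (measurable_of_countable _).aemeasurable (measurable_of_countable _).aemeasurable
      simp only [lintegral_count, Pi.mul_apply] at H
      simp only [lqIdx, hqt, if_false]
      refine H.trans ?_
      gcongr
      have e : ∀ j : ℕ, ENNReal.ofReal ((b:ℝ) ^ (-s * j)) ^ q'.toReal =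
          ENNReal.ofReal ((b:ℝ) ^ (-(q'.toReal * s) * j)) := fun j => by
        rw [ENNReal.ofReal_rpow_of_nonneg (by positivity) hq'0.le, ← Real.rpow_mul hb0]
        congr 2; ring
      simp_rw [e]
      have hlt : (b:ℝ) ^ (-(q'.toReal * s)) < 1 :=
        Real.rpow_lt_one_of_one_lt_of_neg hb1 (by have := mul_pos hq'0 hs; linarith)
      have hle : 0 ≤ 1 - (b:ℝ) ^ (-(q'.toReal * s)) := by linarith
      rw [geo _ (by positivity), ENNReal.ofReal_rpow_of_nonneg (inv_nonneg.2 hle) (by positivity),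
        neg_mul, Real.rpow_neg hle, Real.inv_rpow hle]

def auxF (f : ℝ → ℝ) (t : ℝ) : ℝ := ∫ y in (0:ℝ)..t, (Set.Icc (0:ℝ) 1).indicator f y

lemma aux_g (f : ℝ → ℝ) (hf : Integrable f (volume.restrict (Set.Icc (0:ℝ) 1))) :
    Integrable ((Set.Icc (0:ℝ) 1).indicator f) volume :=
  (integrable_indicator_iff measurableSet_Icc).2 hf

lemma aux_int (f : ℝ → ℝ) (hf : Integrable f (volume.restrict (Set.Icc (0:ℝ) 1))) {u v : ℝ}
    (huv : u ≤ v) : ∫ x in Set.Icc (0:ℝ) 1, f x * (Set.Ico u v).indicator (fun _ => (1:ℝ)) x =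
      auxF f v - auxF f u := by
  have hg := aux_g f hf
  unfold auxF
  rw [intervalIntegral.integral_interval_sub_left hg.intervalIntegrable hg.intervalIntegrable,
    intervalIntegral.integral_of_le huv, ← integral_Ico_eq_integral_Ioc,
    ← integral_indicator measurableSet_Icc, ← integral_indicator measurableSet_Ico]
  congr 1
  ext x
  simp only [Set.indicator_apply]
  split_ifs <;> simp

lemma aux_int_integrable (f : ℝ → ℝ) (hf : Integrable f (volume.restrict (Set.Icc (0:ℝ) 1)))
    (u v : ℝ) : Integrable (fun x => f x * (Set.Ico u v).indicator (fun _ => (1:ℝ)) x)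
      (volume.restrict (Set.Icc (0:ℝ) 1)) := by
  have := hf.indicator (measurableSet_Ico (a := u) (b := v))
  refine this.congr (Filter.Eventually.of_forall fun x => ?_)
  simp only [Set.indicator_apply]
  split_ifs <;> simp

lemma aux_coef (b n i k : ℕ) (hb : 2 ≤ b) (f : ℝ → ℝ)
    (hf : Integrable f (volume.restrict (Set.Icc (0:ℝ) 1))) :
    haarCoefU b f (n+1) i k = (b : ℝ) ^ (((n+1 : ℕ) : ℝ) / 2 - 1) *
      ((b:ℝ) * (auxF f (((b:ℝ) ^ (n+1))⁻¹ * ((b * k + i : ℕ) + 1 : ℝ)) -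
          auxF f (((b:ℝ) ^ (n+1))⁻¹ * ((b * k + i : ℕ) : ℝ)))
        - (auxF f (((b:ℝ) ^ n)⁻¹ * (k + 1)) - auxF f (((b:ℝ) ^ n)⁻¹ * k))) := by
  unfold haarCoefU
  simp_rw [aux_psi_eq b n i k hb]
  rw [← aux_int f hf (by gcongr; linarith), ← aux_int f hf (by gcongr; linarith),
    ← integral_const_mul, ← integral_sub ((aux_int_integrable f hf _ _).const_mul _)
      (aux_int_integrable f hf _ _), ← integral_const_mul]
  congr 1
  ext x
  ring

def auxD (b : ℕ) (f : ℝ → ℝ) (n : ℕ) (x : ℝ) : ℝ :=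
  (b:ℝ) ^ n * (auxF f (((b:ℝ) ^ n)⁻¹ * ((⌊(b:ℝ) ^ n * x⌋₊ : ℝ) + 1)) -
    auxF f (((b:ℝ) ^ n)⁻¹ * (⌊(b:ℝ) ^ n * x⌋₊ : ℝ)))

lemma aux_tele (b n : ℕ) (hb : 2 ≤ b) (f : ℝ → ℝ)
    (hf : Integrable f (volume.restrict (Set.Icc (0:ℝ) 1))) {x : ℝ} (hx : x ∈ Set.Ico (0:ℝ) 1) :
    ∑ k ∈ deltaIdx b (n+1), ∑ i ∈ nablaIdx b (n+1),
      haarCoefU b f (n+1) i k * haarPsi b (n+1) i k x = auxD b f (n+1) x - auxD b f n x := by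
  have hb0 : (0:ℝ) < b := by positivity
  simp only [deltaIdx, nablaIdx, Nat.add_eq_zero_iff, one_ne_zero, and_false, if_false,
    Nat.add_sub_cancel]
  set K := ⌊(b:ℝ) ^ n * x⌋₊ with hK
  set M := ⌊(b:ℝ) ^ (n+1) * x⌋₊ with hM
  have hMK : K = M / b := aux_floor b n hb x
  have hKmem : K ∈ Finset.range (b ^ n) := by
    rw [Finset.mem_range, hK, Nat.floor_lt (by have := hx.1; positivity)]
    push_cast
    have : (0:ℝ) < (b:ℝ)^n := by positivity
    nlinarith [hx.2]
  rw [Finset.sum_eq_single_of_mem K hKmem]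
  swap
  · intro k _ hk
    exact Finset.sum_eq_zero fun i hi => by
      rw [aux_psi_zero b n i k hb hx.1 (by simpa using hi) hk.symm, mul_zero]
  obtain ⟨i0, hi0, hMi⟩ : ∃ i0, i0 < b ∧ M = b * K + i0 :=
    ⟨M % b, Nat.mod_lt _ (by omega), by rw [hMK, Nat.div_add_mod]⟩
  set G : ℕ → ℝ := fun i => auxF f (((b:ℝ) ^ (n+1))⁻¹ * ((b * K + i : ℕ) : ℝ)) with hG
  have e1 : ∀ i : ℕ, auxF f (((b:ℝ) ^ (n+1))⁻¹ * ((b * K + i : ℕ) + 1 : ℝ)) = G (i+1) := by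
    intro i; simp only [hG]; congr 2; push_cast; ring
  have e2 : auxF f (((b:ℝ) ^ n)⁻¹ * (K + 1)) = G b := by
    simp only [hG]; congr 1; push_cast; rw [pow_succ]; field_simp
  have e3 : auxF f (((b:ℝ) ^ n)⁻¹ * K) = G 0 := by
    simp only [hG]; congr 1; push_cast; rw [pow_succ]; field_simp; ring
  have hsum : ∑ i ∈ Finset.range b, (G (i+1) - G i) = G b - G 0 := Finset.sum_range_sub G b
  set w := (b : ℝ) ^ (((n+1 : ℕ) : ℝ) / 2 - 1) with hw
  have hww : w * w * (b:ℝ) = (b:ℝ) ^ n := by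
    rw [hw, ← Real.rpow_add hb0, ← Real.rpow_natCast]
    nth_rewrite 2 [← Real.rpow_one (b:ℝ)]
    rw [← Real.rpow_add hb0]; congr 1; push_cast; ring
  have hterm : ∀ i ∈ Finset.range b, haarCoefU b f (n+1) i K * haarPsi b (n+1) i K x =
      (if i0 = i then w * w * b * (b * (G (i+1) - G i) - (G b - G 0)) else 0)
        - w * w * (b * (G (i+1) - G i) - (G b - G 0)) := by
    intro i _
    rw [aux_coef b n i K hb f hf, aux_psi b n i K hb hx.1, e1, e2, e3, ← hM, ← hK, hMi, ← hw]
    simp only [Nat.add_left_cancel_iff, if_true]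
    split_ifs <;> ring
  rw [Finset.sum_congr rfl hterm, Finset.sum_sub_distrib, Finset.sum_ite_eq,
    if_pos (by simpa using hi0), ← Finset.mul_sum, Finset.sum_sub_distrib, ← Finset.mul_sum, hsum]
  simp only [Finset.sum_const, Finset.card_range, nsmul_eq_mul]
  unfold auxD
  have e4 : auxF f (((b:ℝ) ^ (n+1))⁻¹ * ((b * K + i0 : ℕ) : ℝ)) = G i0 := rfl
  rw [← hM, ← hK, hMi, e1, e2, e3, e4, pow_succ, ← hww]
  ring

lemma aux_partial (b : ℕ) (hb : 2 ≤ b) (f : ℝ → ℝ)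
    (hf : Integrable f (volume.restrict (Set.Icc (0:ℝ) 1))) {x : ℝ} (hx : x ∈ Set.Ico (0:ℝ) 1)
    (n : ℕ) : ∑ j ∈ Finset.range (n+1), ∑ k ∈ deltaIdx b j, ∑ i ∈ nablaIdx b j,
      haarCoefU b f j i k * haarPsi b j i k x = auxD b f n x := by
  induction n with
  | zero =>
    have h : ⌊x⌋₊ = 0 := Nat.floor_eq_zero.2 hx.2
    have := aux_int f hf zero_le_one
    simp [deltaIdx, nablaIdx, haarCoefU, haarPsi, auxD, h, hx.1, hx.2, this]
  | succ n ih =>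
    rw [Finset.sum_range_succ, ih, aux_tele b n hb f hf hx]; ring

lemma aux_lim (b : ℕ) (hb : 2 ≤ b) (f : ℝ → ℝ)
    (hf : Integrable f (volume.restrict (Set.Icc (0:ℝ) 1))) :
    ∀ᵐ x ∂(volume.restrict (Set.Icc (0:ℝ) 1)),
      Filter.Tendsto (fun n => auxD b f n x) Filter.atTop (nhds (f x)) := by
  have hg := aux_g f hf
  have hb1 : (1:ℝ) < b := by exact_mod_cast (by omega : 1 < b)
  have H := IsUnifLocDoublingMeasure.ae_tendsto_average (μ := (volume : Measure ℝ))
    hg.locallyIntegrable 1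
  rw [ae_restrict_iff' measurableSet_Icc]
  filter_upwards [H] with x H hx
  have hpos : ∀ n : ℕ, (0:ℝ) < ((b:ℝ)^n)⁻¹ := fun n => by positivity
  have := H (l := Filter.atTop) (fun n : ℕ => ((b:ℝ)^n)⁻¹ * ((⌊(b:ℝ) ^ n * x⌋₊ : ℝ) + 1/2))
    (fun n : ℕ => ((b:ℝ)^n)⁻¹ / 2) ?_ ?_
  · rw [Set.indicator_of_mem hx] at this
    refine this.congr fun n => ?_
    rw [Real.closedBall_eq_Icc, setAverage_eq, integral_Icc_eq_integral_Ioc]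
    have e1 : ((b:ℝ)^n)⁻¹ * ((⌊(b:ℝ) ^ n * x⌋₊ : ℝ) + 1/2) - ((b:ℝ)^n)⁻¹ / 2 =
      ((b:ℝ)^n)⁻¹ * (⌊(b:ℝ) ^ n * x⌋₊ : ℝ) := by ring
    have e2 : ((b:ℝ)^n)⁻¹ * ((⌊(b:ℝ) ^ n * x⌋₊ : ℝ) + 1/2) + ((b:ℝ)^n)⁻¹ / 2 =
      ((b:ℝ)^n)⁻¹ * ((⌊(b:ℝ) ^ n * x⌋₊ : ℝ) + 1) := by ring
    rw [e1, e2]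
    have hle : ((b:ℝ)^n)⁻¹ * (⌊(b:ℝ) ^ n * x⌋₊ : ℝ) ≤
      ((b:ℝ)^n)⁻¹ * ((⌊(b:ℝ) ^ n * x⌋₊ : ℝ) + 1) := by gcongr; linarith
    rw [← intervalIntegral.integral_of_le hle, Measure.real, Real.volume_Icc,
      ENNReal.toReal_ofReal (by linarith)]
    unfold auxD auxF
    rw [intervalIntegral.integral_interval_sub_left hg.intervalIntegrable hg.intervalIntegrable,
      smul_eq_mul]
    congr 1
    rw [← mul_sub]
    simp
  · rw [tendsto_nhdsWithin_iff]
    constructor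
    · have h := (tendsto_pow_atTop_atTop_of_one_lt hb1).inv_tendsto_atTop
      simpa using h.div_const 2
    · exact Filter.Eventually.of_forall fun n => by simpa using half_pos (hpos n)
  · refine Filter.Eventually.of_forall fun n => ?_
    have h := (aux_mem_Ico (show (0:ℝ) < (b:ℝ)^n by positivity) hx.1 _).2 rfl
    rw [Real.closedBall_eq_Icc]
    constructor
    · refine le_trans (le_of_eq ?_) h.1
      ring
    · refine h.2.le.trans (le_of_eq ?_)
      ring

/-- For `f` with finite Haar wavelet norm the wavelet expansion converges
absolutely at every point, with bound `C_{b,α,p,q} ‖f‖_{wav,α,p,q}`, and `S(f) = f` a.e. -/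
theorem wavelet_expansion_abs_convergence (b : ℕ) (hb : 2 ≤ b)
    (p q p' q' : ℝ≥0∞) (hp : 1 ≤ p) (hq : 1 ≤ q)
    (hp' : 1 / p + 1 / p' = 1) (hq' : 1 / q + 1 / q' = 1)
    (α : ℝ) (hα1 : q = 1 → 1 / p.toReal ≤ α) (hα2 : 1 < q → 1 / p.toReal < α)
    (f : ℝ → ℝ) (hf1 : Integrable f (volume.restrict (Set.Icc (0:ℝ) 1)))
    (hfw : wavNormU b α p q f < ∞) :
    (∀ x ∈ Set.Icc (0:ℝ) 1,
      Summable (fun j : ℕ =>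
        ∑ k ∈ deltaIdx b j, ∑ i ∈ nablaIdx b j, |haarCoefU b f j i k| * |haarPsi b j i k x|) ∧
      (∑' j : ℕ,
        ∑ k ∈ deltaIdx b j, ∑ i ∈ nablaIdx b j, |haarCoefU b f j i k| * |haarPsi b j i k x|) ≤
          Cconst b α p p' q' * (wavNormU b α p q f).toReal) ∧
    (∀ᵐ x ∂(volume.restrict (Set.Icc (0:ℝ) 1)), wavExpU b f x = f x) := by
  have hb0 : (0:ℝ) < b := by positivity
  have key : ∀ x ∈ Set.Icc (0:ℝ) 1,
      ∑' j : ℕ, ENNReal.ofReal (∑ k ∈ deltaIdx b j, ∑ i ∈ nablaIdx b j,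
        |haarCoefU b f j i k| * |haarPsi b j i k x|) ≤
      ENNReal.ofReal (Cconst b α p p' q') * wavNormU b α p q f := by
    intro x hx
    have H := aux_holder b hb q q' hq hq' (α - 1 / p.toReal)
      (fun h => by have := hα1 h; linarith) (fun h => by have := hα2 h; linarith)
      (fun j : ℕ => ENNReal.ofReal ((b : ℝ) ^ ((α - 1 / p.toReal + 1 / 2) * (j : ℝ))) *
      lpIdx p (deltaIdx b j ×ˢ nablaIdx b j)
        (fun ki => ENNReal.ofReal |haarCoefU b f j ki.2 ki.1|))
    calc _ ≤ ∑' j : ℕ, ENNReal.ofReal ((b:ℝ) ^ ((1 / p').toReal)) *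
          (ENNReal.ofReal ((b:ℝ) ^ (-(α - 1 / p.toReal) * j)) *
          (ENNReal.ofReal ((b : ℝ) ^ ((α - 1 / p.toReal + 1 / 2) * (j : ℝ))) *
            lpIdx p (deltaIdx b j ×ˢ nablaIdx b j)
            (fun ki => ENNReal.ofReal |haarCoefU b f j ki.2 ki.1|))) := by
          apply ENNReal.tsum_le_tsum
          intro j
          refine (aux_level b j hb p p' hp hp' (fun i k => haarCoefU b f j i k) hx.1).trans
            (le_of_eq ?_)
          congr 1
          rw [← mul_assoc, ← ENNReal.ofReal_mul (by positivity), ← Real.rpow_add hb0]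
          congr 3
          ring
      _ ≤ _ := by
          rw [ENNReal.tsum_mul_left, Cconst, ENNReal.ofReal_mul (by positivity), mul_assoc]
          gcongr
          exact H
  have hC : 0 ≤ Cconst b α p p' q' := by
    unfold Cconst
    have hb1 : (1:ℝ) ≤ b := by exact_mod_cast (by omega : 1 ≤ b)
    have hs : 0 ≤ α - 1 / p.toReal := by
      rcases hq.eq_or_lt with h | h
      · have := hα1 h.symm; linarith
      · have := hα2 h; linarith
    have : (b : ℝ) ^ (-(q'.toReal) * (α - 1 / p.toReal)) ≤ 1 :=
      Real.rpow_le_one_of_one_le_of_nonpos hb1 (by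
        have : 0 ≤ q'.toReal * (α - 1 / p.toReal) := by positivity
        linarith)
    have : 0 ≤ 1 - (b : ℝ) ^ (-(q'.toReal) * (α - 1 / p.toReal)) := by linarith
    positivity
  have main : ∀ x ∈ Set.Icc (0:ℝ) 1,
      Summable (fun j : ℕ =>
        ∑ k ∈ deltaIdx b j, ∑ i ∈ nablaIdx b j, |haarCoefU b f j i k| * |haarPsi b j i k x|) ∧
      (∑' j : ℕ,
        ∑ k ∈ deltaIdx b j, ∑ i ∈ nablaIdx b j, |haarCoefU b f j i k| * |haarPsi b j i k x|) ≤
          Cconst b α p p' q' * (wavNormU b α p q f).toReal := by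
    intro x hx
    have hk := key x hx
    have hfin : ENNReal.ofReal (Cconst b α p p' q') * wavNormU b α p q f ≠ ∞ :=
      ENNReal.mul_ne_top ENNReal.ofReal_ne_top hfw.ne
    have hnn : ∀ j : ℕ, 0 ≤ ∑ k ∈ deltaIdx b j, ∑ i ∈ nablaIdx b j,
        |haarCoefU b f j i k| * |haarPsi b j i k x| := fun j => by positivity
    have hS := ENNReal.summable_toReal (ne_top_of_le_ne_top hfin hk)
    simp only [ENNReal.toReal_ofReal (hnn _)] at hS
    refine ⟨hS, ?_⟩
    rw [← ENNReal.ofReal_tsum_of_nonneg hnn hS] at hk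
    have := ENNReal.toReal_mono hfin hk
    rwa [ENNReal.toReal_ofReal (tsum_nonneg hnn), ENNReal.toReal_mul,
      ENNReal.toReal_ofReal hC] at this
  refine ⟨main, ?_⟩
  have h1 : ∀ᵐ x ∂(volume.restrict (Set.Icc (0:ℝ) 1)), x ≠ 1 :=
    ae_restrict_of_ae (Measure.ae_ne volume 1)
  filter_upwards [aux_lim b hb f hf1, h1, ae_restrict_mem measurableSet_Icc] with x hlim hx1 hx
  have hx' : x ∈ Set.Ico (0:ℝ) 1 := ⟨hx.1, lt_of_le_of_ne hx.2 hx1⟩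
  have hsum : Summable (fun j : ℕ => ∑ k ∈ deltaIdx b j, ∑ i ∈ nablaIdx b j,
      haarCoefU b f j i k * haarPsi b j i k x) := by
    refine Summable.of_norm_bounded (main x hx).1 fun j => ?_
    refine (norm_sum_le _ _).trans (Finset.sum_le_sum fun k _ => ?_)
    refine (norm_sum_le _ _).trans (Finset.sum_le_sum fun i _ => ?_)
    rw [norm_mul, Real.norm_eq_abs, Real.norm_eq_abs]
  have ht := (Filter.tendsto_add_atTop_iff_nat 1).2 hsum.hasSum.tendsto_sum_nat
  simp only [aux_partial b hb f hf1 hx'] at ht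
  exact tendsto_nhds_unique ht hlim

end
end

section
/- Fix an integer base b ≥ 2, p ∈ [1,∞] and q ∈ [1,∞), and let f : [0,1] → ℝ be the identity function f(x) = x. Then ⟨f, ψ^0_{0,0}⟩ = 1/2 and ⟨f, ψ^j_{i,k}⟩ = (2i+1−b) b^{−3j/2}/2 for all j ≥ 1, i ∈ ∇_j, k ∈ Δ_{j−1}; consequently, for α ∈ ℝ the Haar wavelet norm ‖f‖_{wav,α,p,q} is finite if and only if α < 1. In particular, the identity function, which belongs to H_{1,p} (being an absolutely continuous function with derivative 1_{[0,1)} ∈ L_p), does not belong to the Haar wavelet space H_{wav,α,p,q} for any α ≥ 1. -/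
open MeasureTheory ENNReal Set

noncomputable section

theorem aux_int_s17 (a c : ℝ) (ha : 0 ≤ a) (hac : a ≤ c) (hc : c ≤ 1) :
    IntegrableOn (fun x : ℝ => x * (Set.Ico a c).indicator (fun _ => (1:ℝ)) x) (Set.Icc 0 1) ∧
    ∫ x in Set.Icc (0:ℝ) 1, x * (Set.Ico a c).indicator (fun _ => (1:ℝ)) x
      = (c ^ 2 - a ^ 2) / 2 := by
  have h : (fun x : ℝ => x * (Set.Ico a c).indicator (fun _ => (1:ℝ)) x)
      = (Set.Ico a c).indicator (fun x => x) := by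
    funext x
    by_cases hx : x ∈ Set.Ico a c <;> simp [hx]
  rw [h]
  constructor
  · apply Integrable.indicator _ measurableSet_Ico
    exact continuous_id.integrableOn_Icc
  · rw [setIntegral_indicator measurableSet_Ico]
    have : Set.Icc (0:ℝ) 1 ∩ Set.Ico a c = Set.Ico a c := by
      apply Set.inter_eq_right.2
      intro x hx
      exact ⟨ha.trans hx.1, hx.2.le.trans hc⟩
    rw [this, integral_Ico_eq_integral_Ioc, ← intervalIntegral.integral_of_le hac, integral_id]

theorem aux_zero (b : ℕ) : haarCoefU b (fun x => x) 0 0 0 = 1 / 2 := by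
  have := (aux_int_s17 0 1 le_rfl zero_le_one le_rfl).2
  simp only [haarCoefU, haarPsi, if_true]
  rw [this]; norm_num

theorem aux_coef_s17 (b : ℕ) (hb : 2 ≤ b) (j : ℕ) (hj : 1 ≤ j) (i : ℕ) (hi : i ∈ nablaIdx b j)
    (k : ℕ) (hk : k ∈ deltaIdx b j) :
      haarCoefU b (fun x => x) j i k =
        (2 * (i : ℝ) + 1 - (b : ℝ)) * (b : ℝ) ^ (-(3 / 2 : ℝ) * (j : ℝ)) / 2 := by
  obtain ⟨n, rfl⟩ : ∃ n, j = n + 1 := ⟨j - 1, by omega⟩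
  have hi' : i + 1 ≤ b := by simpa [nablaIdx] using hi
  have hk' : k + 1 ≤ b ^ n := by simpa [deltaIdx] using hk
  have hiR : (i : ℝ) + 1 ≤ b := by exact_mod_cast hi'
  have hkR : (k : ℝ) + 1 ≤ (b : ℝ) ^ n := by exact_mod_cast hk'
  have hb0 : (0 : ℝ) < b := by positivity
  have hn0 : (0 : ℝ) < (b : ℝ) ^ n := by positivity
  have e1 : (b : ℝ) ^ (-((n + 1 : ℕ) : ℝ)) = ((b : ℝ) ^ n)⁻¹ * (b : ℝ)⁻¹ := by
    rw [Real.rpow_neg hb0.le, Real.rpow_natCast, pow_succ, mul_inv]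
  have e2 : (b : ℝ) ^ (1 - ((n + 1 : ℕ) : ℝ)) = ((b : ℝ) ^ n)⁻¹ := by
    rw [show (1 - ((n + 1 : ℕ) : ℝ)) = -(n : ℝ) by push_cast; ring, Real.rpow_neg hb0.le,
      Real.rpow_natCast]
  have e3 : (b : ℝ) ^ (-(3 / 2 : ℝ) * ((n + 1 : ℕ) : ℝ))
      = (b : ℝ) ^ (((n + 1 : ℕ) : ℝ) / 2 - 1) * (((b : ℝ) ^ n)⁻¹ ^ 2 * (b : ℝ)⁻¹) := by
    have : ((b : ℝ) ^ n)⁻¹ ^ 2 * (b : ℝ)⁻¹ = (b : ℝ) ^ (-(2 * (n : ℝ) + 1)) := by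
      rw [Real.rpow_neg hb0.le, show (2 * (n : ℝ) + 1) = ((2 * n + 1 : ℕ) : ℝ) by push_cast; ring,
        Real.rpow_natCast, pow_succ (b : ℝ) (2 * n), mul_inv, inv_pow, ← pow_mul, mul_comm 2 n]
    rw [this, ← Real.rpow_add hb0]
    congr 1; push_cast; ring
  have hE : ((b : ℝ) ^ n)⁻¹ * ((k : ℝ) + 1) ≤ 1 := by
    rw [inv_mul_le_iff₀ hn0]; linarith
  set N := ((b : ℝ) ^ n)⁻¹ with hN
  have hNp : 0 < N := inv_pos.2 hn0
  have A2 := aux_int_s17 (N * k) (N * (k + 1)) (by positivity) (by nlinarith) hE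
  have hle : N * (b : ℝ)⁻¹ * ((b : ℝ) * k + i + 1) ≤ N * (k + 1) := by
    rw [mul_assoc]
    apply mul_le_mul_of_nonneg_left _ hNp.le
    rw [inv_mul_le_iff₀ hb0]; nlinarith
  have A1 := aux_int_s17 (N * (b : ℝ)⁻¹ * ((b : ℝ) * k + i)) (N * (b : ℝ)⁻¹ * ((b : ℝ) * k + i + 1))
    (by positivity)
    (mul_le_mul_of_nonneg_left (by linarith) (by positivity)) (hle.trans hE)
  simp only [haarCoefU, haarPsi, if_neg (Nat.succ_ne_zero n)]
  rw [e3, e1, e2]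
  have hfun : ∀ (C B : ℝ) (u v : ℝ → ℝ), (fun x : ℝ => x * (C * (B * u x - v x)))
      = fun x => C * (B * (x * u x) - x * v x) := by
    intro C B u v; funext x; ring
  rw [hfun, integral_const_mul, integral_sub (A1.1.const_mul _) A2.1, integral_const_mul,
    A1.2, A2.2]
  field_simp
  ring

theorem aux_lp_s17 (b : ℕ) (hb : 2 ≤ b) (p : ℝ≥0∞) (hp : 1 ≤ p) :
    ∃ K : ℝ≥0∞, K ≠ 0 ∧ K ≠ ∞ ∧ ∀ n : ℕ,
      lpIdx p (deltaIdx b (n + 1) ×ˢ nablaIdx b (n + 1))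
        (fun ki => ENNReal.ofReal |haarCoefU b (fun x => x) (n + 1) ki.2 ki.1|)
      = K * (b : ℝ≥0∞) ^ ((1 / p.toReal - 3 / 2) * ((n + 1 : ℕ) : ℝ)) := by
  have hb0 : (0 : ℝ) < b := by positivity
  have hB0 : (b : ℝ≥0∞) ≠ 0 := by simp; omega
  have hBt : (b : ℝ≥0∞) ≠ ∞ := by simp
  set c : ℕ → ℝ≥0∞ := fun i => ENNReal.ofReal (|2 * (i : ℝ) + 1 - b| / 2) with hc
  have hc0 : c 0 ≠ 0 := by
    have : (2 : ℝ) ≤ b := by exact_mod_cast hb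
    simp only [hc, ne_eq, ENNReal.ofReal_eq_zero, not_le]
    rw [abs_of_neg (by push_cast; linarith)]
    push_cast; linarith
  have hct : ∀ i, c i ≠ ∞ := fun i => ENNReal.ofReal_ne_top
  have key : ∀ n : ℕ, ∀ ki ∈ deltaIdx b (n + 1) ×ˢ nablaIdx b (n + 1),
      ENNReal.ofReal |haarCoefU b (fun x => x) (n + 1) ki.2 ki.1|
        = c ki.2 * (b : ℝ≥0∞) ^ (-(3 / 2 : ℝ) * ((n + 1 : ℕ) : ℝ)) := by
    intro n ki hki
    rw [Finset.mem_product] at hki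
    rw [aux_coef_s17 b hb (n + 1) (by omega) _ hki.2 _ hki.1]
    rw [mul_div_right_comm, abs_mul, abs_div, abs_of_pos (Real.rpow_pos_of_pos hb0 _), abs_two,
      ENNReal.ofReal_mul (by positivity), ← ENNReal.ofReal_rpow_of_pos hb0, ENNReal.ofReal_natCast]
  have hd : ∀ n, deltaIdx b (n + 1) = Finset.range (b ^ n) := by intro n; simp [deltaIdx]
  have hna : ∀ n, nablaIdx b (n + 1) = Finset.range b := by intro n; simp [nablaIdx]
  by_cases hpt : p = ∞
  · refine ⟨(Finset.range b).sup c, ?_, ?_, ?_⟩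
    · have := Finset.le_sup (f := c) (Finset.mem_range.2 (by omega : 0 < b))
      exact fun h => hc0 (le_antisymm (h ▸ this) (zero_le))
    · rw [← lt_top_iff_ne_top, Finset.sup_lt_iff (by simp)]
      exact fun i _ => (hct i).lt_top
    · intro n
      have hne : (Finset.range (b ^ n)).Nonempty := by
        simp; omega
      simp only [lpIdx, if_pos hpt]
      rw [Finset.sup_congr rfl (key n), hd, hna, Finset.sup_product_left]
      simp only [Finset.sup_const hne]
      rw [hpt]
      simp only [ENNReal.toReal_top, _root_.div_zero, _root_.zero_sub]
      set X := (b : ℝ≥0∞) ^ (-(3 / 2 : ℝ) * ((n + 1 : ℕ) : ℝ))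
      have := Finset.apply_sup_eq_sup_comp (s := Finset.range b) (f := c) (fun y : ℝ≥0∞ => y * X)
        (fun x y => (show Monotone (fun y : ℝ≥0∞ => y * X) from
          fun x y h => mul_le_mul_left h X).map_sup x y) (by simp)
      exact this.symm
  · have hP : 0 < p.toReal := ENNReal.toReal_pos (by rintro rfl; simp at hp) hpt
    set P := p.toReal
    have hS0 : ∑ i ∈ Finset.range b, c i ^ P ≠ 0 := by
      intro h
      rw [Finset.sum_eq_zero_iff] at h
      have := h 0 (Finset.mem_range.2 (by omega))
      rw [ENNReal.rpow_eq_zero_iff_of_pos hP] at this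
      exact hc0 this
    have hSt : ∑ i ∈ Finset.range b, c i ^ P ≠ ∞ := by
      rw [ENNReal.sum_ne_top]
      exact fun i _ => ENNReal.rpow_ne_top_of_nonneg hP.le (hct i)
    refine ⟨((b : ℝ≥0∞) ^ (-1 : ℝ) * ∑ i ∈ Finset.range b, c i ^ P) ^ (1 / P), ?_, ?_, ?_⟩
    · rw [ne_eq, ENNReal.rpow_eq_zero_iff_of_pos (by positivity), mul_eq_zero, not_or]
      exact ⟨(ENNReal.rpow_pos (pos_iff_ne_zero.2 hB0) hBt).ne', hS0⟩
    · apply ENNReal.rpow_ne_top_of_nonneg (by positivity)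
      exact ENNReal.mul_ne_top (ENNReal.rpow_ne_top_of_ne_zero hB0 hBt) hSt
    · intro n
      simp only [lpIdx, if_neg hpt]
      rw [Finset.sum_congr rfl (fun ki hki => congrArg (fun y : ℝ≥0∞ => y ^ P) (key n ki hki)), hd, hna,
        Finset.sum_product]
      simp only [Finset.sum_const, Finset.card_range, nsmul_eq_mul]
      simp only [ENNReal.mul_rpow_of_nonneg _ _ hP.le]
      rw [← Finset.sum_mul]
      have hpow : ((b ^ n : ℕ) : ℝ≥0∞) = (b : ℝ≥0∞) ^ (n : ℝ) := by
        rw [ENNReal.rpow_natCast]; push_cast; rfl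
      rw [hpow]
      have hP1 : 0 ≤ 1 / P := by positivity
      change ((b : ℝ≥0∞) ^ (n : ℝ) * ((∑ i ∈ Finset.range b, c i ^ P) * _)) ^ (1 / P) = _
      set S := ∑ i ∈ Finset.range b, c i ^ P
      rw [← ENNReal.rpow_mul, mul_left_comm, ← ENNReal.rpow_add _ _ hB0 hBt,
        ENNReal.mul_rpow_of_nonneg _ _ hP1, ENNReal.mul_rpow_of_nonneg _ _ hP1,
        ← ENNReal.rpow_mul, ← ENNReal.rpow_mul,
        mul_comm ((b : ℝ≥0∞) ^ (-1 * (1 / P))), mul_assoc (S ^ (1 / P)),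
        ← ENNReal.rpow_add _ _ hB0 hBt]
      congr 2
      push_cast
      field_simp
      ring

theorem aux_norm (b : ℕ) (hb : 2 ≤ b)
    (p q : ℝ≥0∞) (hp : 1 ≤ p) (hq : 1 ≤ q) (hqtop : q ≠ ∞) (α : ℝ) :
    wavNormU b α p q (fun x => x) < ∞ ↔ α < 1 := by
  obtain ⟨K, hK0, hKt, hK⟩ := aux_lp_s17 b hb p hp
  have hb0 : (0 : ℝ) < b := by positivity
  have hb1 : (1 : ℝ≥0∞) < b := by exact_mod_cast (by omega : 1 < b)
  have hB0 : (b : ℝ≥0∞) ≠ 0 := by simp; omega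
  have hBt : (b : ℝ≥0∞) ≠ ∞ := by simp
  have hQ : 0 < q.toReal := ENNReal.toReal_pos (by rintro rfl; simp at hq) hqtop
  simp only [wavNormU, lqIdx, if_neg hqtop]
  set Q := q.toReal
  rw [ENNReal.rpow_lt_top_iff_of_pos (by positivity), tsum_eq_zero_add' ENNReal.summable]
  simp only [hK, ← ENNReal.ofReal_rpow_of_pos hb0, ENNReal.ofReal_natCast]
  set r : ℝ≥0∞ := (b : ℝ≥0∞) ^ ((α - 1) * Q) with hr
  have hr0 : r ≠ 0 := (ENNReal.rpow_pos (pos_iff_ne_zero.2 hB0) hBt).ne'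
  have hrt : r ≠ ∞ := ENNReal.rpow_ne_top_of_ne_zero hB0 hBt
  have hterm : ∀ n : ℕ, ((b : ℝ≥0∞) ^ ((α - 1 / p.toReal + 1 / 2) * ((n + 1 : ℕ) : ℝ)) *
      (K * (b : ℝ≥0∞) ^ ((1 / p.toReal - 3 / 2) * ((n + 1 : ℕ) : ℝ)))) ^ Q = K ^ Q * r * r ^ n := by
    intro n
    rw [mul_left_comm, ← ENNReal.rpow_add _ _ hB0 hBt, ENNReal.mul_rpow_of_nonneg _ _ hQ.le,
      ← ENNReal.rpow_mul, mul_assoc, ← pow_succ', hr, ← ENNReal.rpow_natCast, ← ENNReal.rpow_mul]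
    congr 2
    ring
  simp only [hterm]
  rw [ENNReal.tsum_mul_left, ENNReal.tsum_geometric, ENNReal.add_lt_top]
  have h0 : ((b : ℝ≥0∞) ^ ((α - 1 / p.toReal + 1 / 2) * ((0 : ℕ) : ℝ)) *
      lpIdx p (deltaIdx b 0 ×ˢ nablaIdx b 0)
        (fun ki => ENNReal.ofReal |haarCoefU b (fun x => x) 0 ki.2 ki.1|)) ^ Q < ∞ := by
    apply ENNReal.rpow_lt_top_of_nonneg hQ.le
    apply ENNReal.mul_ne_top (ENNReal.rpow_ne_top_of_ne_zero hB0 hBt)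
    unfold lpIdx
    split_ifs with h
    · simp [deltaIdx, nablaIdx]
    · apply ENNReal.rpow_ne_top_of_nonneg (by positivity)
      simp [deltaIdx, nablaIdx]
  have hKr : K ^ Q * r ≠ 0 := mul_ne_zero
    (ENNReal.rpow_pos (pos_iff_ne_zero.2 hK0) hKt).ne' hr0
  have hKrt : K ^ Q * r ≠ ∞ := ENNReal.mul_ne_top (ENNReal.rpow_ne_top_of_nonneg hQ.le hKt) hrt
  have hr1 : r < 1 ↔ α < 1 := by
    constructor
    · intro h
      by_contra hα
      push Not at hα
      have : 1 ≤ r := by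
        rw [hr, ← ENNReal.rpow_zero (x := (b : ℝ≥0∞))]
        exact ENNReal.rpow_le_rpow_of_exponent_le hb1.le (mul_nonneg (by linarith) hQ.le)
      exact absurd h (not_lt.2 this)
    · intro h
      exact ENNReal.rpow_lt_one_of_one_lt_of_neg hb1 (mul_neg_of_neg_of_pos (by linarith) hQ)
  rw [← hr1]
  constructor
  · rintro ⟨-, h⟩
    by_contra hr
    push Not at hr
    rw [tsub_eq_zero_of_le hr, ENNReal.inv_zero, ENNReal.mul_top hKr] at h
    exact lt_irrefl _ h
  · intro h
    refine ⟨h0, (ENNReal.mul_ne_top hKrt ?_).lt_top⟩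
    rw [ENNReal.inv_ne_top]
    exact (tsub_pos_of_lt h).ne'

/-- The Haar coefficients of the identity function `f(x) = x` are
`⟨f,ψ^0_{0,0}⟩ = 1/2` and `⟨f,ψ^j_{i,k}⟩ = (2i+1-b) b^{-3j/2}/2` for `j ≥ 1`, and its
Haar wavelet norm is finite if and only if `α < 1`; in particular the identity function
(which lies in `H_{1,p}`) is not in `H_{wav,α,p,q}` for any `α ≥ 1`. -/
theorem identity_coefficients_and_norm (b : ℕ) (hb : 2 ≤ b)
    (p q : ℝ≥0∞) (hp : 1 ≤ p) (hq : 1 ≤ q) (hqtop : q ≠ ∞) :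
    haarCoefU b (fun x => x) 0 0 0 = 1 / 2 ∧
    (∀ j : ℕ, 1 ≤ j → ∀ i ∈ nablaIdx b j, ∀ k ∈ deltaIdx b j,
      haarCoefU b (fun x => x) j i k =
        (2 * (i : ℝ) + 1 - (b : ℝ)) * (b : ℝ) ^ (-(3 / 2 : ℝ) * (j : ℝ)) / 2) ∧
    (∀ α : ℝ, wavNormU b α p q (fun x => x) < ∞ ↔ α < 1) := by
  exact ⟨aux_zero b, fun j hj i hi k hk => aux_coef_s17 b hb j hj i hi k hk,
    aux_norm b hb p q hp hq hqtop⟩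

end
end
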